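/- For all positive integers k and w there exists a number p = p(k,w) such that every 2-connected graph of tree-width less than w and path-width at least p has a minor isomorphic to 𝒫_k or a minor isomorphic to 𝒬_k. -/

import Mathlib

/-!
Common definitions: minors, widths, connectivity, the specific graphs
`K4`, `K23`, `C32`, `graphA`, the binary trees `CT_h`, the graphs `𝒫_k`, `𝒬_k`,
the trees `T_h`, homeomorphic embeddings, cascades, and related notions,
following Dang--Thomas, "Minors of two-connected graphs of large path-width".
-/

open SimpleGraph

/-- A minor model of `H` in `G`: branch sets `f w` are nonempty, connected,
pairwise disjoint, and edges of `H` are realized by edges of `G` between branch sets. -/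
def IsMinorModel {W V : Type*} (H : SimpleGraph W) (G : SimpleGraph V) (f : W → Set V) : Prop :=
  (∀ w, (f w).Nonempty) ∧
  (∀ w, (G.induce (f w)).Connected) ∧
  (∀ w₁ w₂ : W, w₁ ≠ w₂ → Disjoint (f w₁) (f w₂)) ∧
  (∀ w₁ w₂ : W, H.Adj w₁ w₂ → ∃ v₁ ∈ f w₁, ∃ v₂ ∈ f w₂, G.Adj v₁ v₂)

/-- `H` is (isomorphic to) a minor of `G`. -/
def IsMinor {W V : Type*} (H : SimpleGraph W) (G : SimpleGraph V) : Prop :=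
  ∃ f : W → Set V, IsMinorModel H G f

/-- The complete graph on four vertices. -/
def K4 : SimpleGraph (Fin 4) := ⊤

/-- The complete bipartite graph `K_{2,3}`. -/
def K23 : SimpleGraph (Fin 2 ⊕ Fin 3) := completeBipartiteGraph (Fin 2) (Fin 3)

/-- The graph `A`: a cycle `a₁a₂a₃a₄a₅a₆a₁` plus the edges `a₁a₃`, `a₃a₅`, `a₅a₁`. -/
def graphA : SimpleGraph (Fin 6) :=
  SimpleGraph.fromEdgeSet
    {s(0, 1), s(1, 2), s(2, 3), s(3, 4), s(4, 5), s(5, 0), s(0, 2), s(2, 4), s(4, 0)}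

/-- The graph `C_{3,2}`: two disjoint triangles. -/
def C32 : SimpleGraph (Fin 2 × Fin 3) :=
  SimpleGraph.fromRel (fun u v => u.1 = v.1)

/-- A graph is outerplanar iff it has no `K₄` minor and no `K_{2,3}` minor
(the classical characterization of outerplanarity). -/
def Outerplanar {V : Type*} (G : SimpleGraph V) : Prop :=
  ¬ IsMinor K4 G ∧ ¬ IsMinor K23 G

/-- `G` is `k`-connected: it has more than `k` vertices and deleting fewer than `k`
vertices leaves a connected graph. -/
def IsKConnected {V : Type*} [Fintype V] (k : ℕ) (G : SimpleGraph V) : Prop :=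
  k + 1 ≤ Fintype.card V ∧
  ∀ S : Finset V, S.card < k → (G.induce ((↑S : Set V)ᶜ)).Connected

/-- `(Tr, X)` is a tree-decomposition of `G`: `Tr` is a tree, the bags `X t` cover all
vertices and edges (W1), and whenever `t₂` lies on the path of `Tr` between `t₁` and `t₃`
we have `X t₁ ∩ X t₃ ⊆ X t₂` (W2). -/
def IsTreeDecomp {V T : Type*} (G : SimpleGraph V) (Tr : SimpleGraph T) (X : T → Finset V) :
    Prop :=
  Tr.IsTree ∧
  (∀ v : V, ∃ t, v ∈ X t) ∧
  (∀ u v : V, G.Adj u v → ∃ t, u ∈ X t ∧ v ∈ X t) ∧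
  (∀ (t₁ t₂ t₃ : T) (p : Tr.Walk t₁ t₃), p.IsPath → t₂ ∈ p.support →
    ∀ v : V, v ∈ X t₁ → v ∈ X t₃ → v ∈ X t₂)

/-- A path-decomposition of `G`, with bags indexed by `Fin n`. -/
def IsPathDecomp {V : Type*} (G : SimpleGraph V) {n : ℕ} (X : Fin n → Finset V) : Prop :=
  (∀ v : V, ∃ i, v ∈ X i) ∧
  (∀ u v : V, G.Adj u v → ∃ i, u ∈ X i ∧ v ∈ X i) ∧
  (∀ i j k : Fin n, i ≤ j → j ≤ k → ∀ v : V, v ∈ X i → v ∈ X k → v ∈ X j)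

/-- The path-width of a finite graph: the least `w` such that `G` has a
path-decomposition all of whose bags have at most `w + 1` vertices. -/
noncomputable def pathwidth {V : Type*} [Fintype V] (G : SimpleGraph V) : ℕ :=
  sInf {w | ∃ (n : ℕ) (X : Fin n → Finset V), IsPathDecomp G X ∧ ∀ i, (X i).card ≤ w + 1}

/-- The tree-width of a finite graph: the least `w` such that `G` has a
tree-decomposition all of whose bags have at most `w + 1` vertices. -/
noncomputable def treewidth {V : Type*} [Fintype V] (G : SimpleGraph V) : ℕ :=
  sInf {w | ∃ (T : Type) (_ : Fintype T) (Tr : SimpleGraph T) (X : T → Finset V),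
    IsTreeDecomp G Tr X ∧ ∀ t, (X t).card ≤ w + 1}

/-- Vertices of the binary tree `CT_h`: paths from the root, recorded as reversed
lists of left/right moves, of length at most `h`. -/
abbrev CTVert (h : ℕ) := {l : List Bool // l.length ≤ h}

/-- The binary tree `CT_h` of height `h`. -/
def CTgraph (h : ℕ) : SimpleGraph (CTVert h) :=
  SimpleGraph.fromEdgeSet
    {e | ∃ (b : Bool) (σ : List Bool) (hσ : σ.length < h),
      e = s((⟨σ, le_of_lt hσ⟩ : CTVert h), (⟨b :: σ, by simpa using hσ⟩ : CTVert h))}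

/-- The graph `𝒫_k`: the binary tree `CT_k` together with one extra vertex (`none`)
adjacent to every leaf of `CT_k`. -/
def Pgraph (k : ℕ) : SimpleGraph (Option (CTVert k)) :=
  SimpleGraph.fromEdgeSet
    ({e | ∃ (b : Bool) (σ : List Bool) (hσ : σ.length < k),
        e = s(some (⟨σ, le_of_lt hσ⟩ : CTVert k), some (⟨b :: σ, by simpa using hσ⟩ : CTVert k))} ∪
     {e | ∃ l : CTVert k, l.1.length = k ∧ e = s(none, some l)})

/-- Vertices of `𝒬_k`: the two base vertices of the root triangle (`Sum.inl false` and
`Sum.inl true`), together with one apex vertex for each node of the complete binary tree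
of depth `< k` (recorded as a reversed list of moves). -/
abbrev QVert (k : ℕ) := Bool ⊕ {l : List Bool // l.length < k}

/-- The two ends of the base edge of the copy of the triangle at node `σ` of `𝒬_k`. -/
def qbase (k : ℕ) : List Bool → QVert k × QVert k
  | [] => (Sum.inl false, Sum.inl true)
  | b :: σ =>
      ((if b then (qbase k σ).2 else (qbase k σ).1),
        if h : σ.length < k then Sum.inr ⟨σ, h⟩ else Sum.inl false)

/-- The graph `𝒬_k`, built from triangles as in the recursive definition: the triangle at
node `σ` consists of the base edge `qbase k σ` together with the apex vertex `Sum.inr σ`;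
the base edge of `𝒬_k` is `s(Sum.inl false, Sum.inl true)`. -/
def Qgraph (k : ℕ) : SimpleGraph (QVert k) :=
  SimpleGraph.fromEdgeSet
    ({s(Sum.inl false, Sum.inl true)} ∪
     {e | ∃ (σ : List Bool) (h : σ.length < k),
        e = s(Sum.inr ⟨σ, h⟩, (qbase k σ).1) ∨ e = s(Sum.inr ⟨σ, h⟩, (qbase k σ).2)})

/-- The minor vertices of the tree `T_h` (one for each string of length `≤ h`). -/
abbrev MVert (h : ℕ) := {l : List Bool // l.length ≤ h}

/-- The major vertices of the tree `T_h` (one for each string of length `≤ h - 1`). -/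
abbrev JVert (h : ℕ) := {l : List Bool // l.length + 1 ≤ h}

/-- Vertices of the tree `T_h` (obtained from `CT_h` by subdividing every edge not incident
with a degree-one vertex and adding the minor root). -/
abbrev TVert (h : ℕ) := MVert h ⊕ JVert h

/-- The tree `T_h`: each major vertex `σ` is adjacent to the minor vertices `σ` (its parent),
`false :: σ` (its left neighbor) and `true :: σ` (its right neighbor). -/
def Tgraph (h : ℕ) : SimpleGraph (TVert h) :=
  SimpleGraph.fromEdgeSet
    {e | ∃ (σ : List Bool) (hσ : σ.length + 1 ≤ h),
      e = s(Sum.inr ⟨σ, hσ⟩, Sum.inl ⟨σ, Nat.le_of_succ_le hσ⟩) ∨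
      ∃ b : Bool, e = s(Sum.inr ⟨σ, hσ⟩, Sum.inl ⟨b :: σ, by simpa using hσ⟩)}

/-- A homeomorphic embedding of `TA` into `TB`: an injection such that for any two edges of
`TA` sharing an end `t`, the corresponding paths of `TB` are edge-disjoint. -/
def IsHomeoEmb {A B : Type*} (TA : SimpleGraph A) (TB : SimpleGraph B) (η : A → B) : Prop :=
  Function.Injective η ∧
  ∀ ⦃t t₁ t₂ : A⦄, TA.Adj t t₁ → TA.Adj t t₂ → t₁ ≠ t₂ →
    ∀ (p₁ : TB.Walk (η t) (η t₁)) (p₂ : TB.Walk (η t) (η t₂)),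
      p₁.IsPath → p₂.IsPath → ∀ e ∈ p₁.edges, e ∉ p₂.edges

/-- `v` lies in the span of `η`: it lies on a path of `TB` between two vertices in the
image of `η`. -/
def inSpan {A B : Type*} (TB : SimpleGraph B) (η : A → B) (v : B) : Prop :=
  ∃ (a₁ a₂ : A) (p : TB.Walk (η a₁) (η a₂)), p.IsPath ∧ v ∈ p.support

/-- A cascade of height `h` and size `s` in the tree-decomposition `(Tr, X)`:
a homeomorphic embedding of `T_h` with `|X (η t)| = s` for every minor vertex `t`
and `|X t| ≥ s` for every `t` in the span. -/
def IsCascade {V T : Type*} (Tr : SimpleGraph T) (X : T → Finset V) (h s : ℕ)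
    (η : TVert h → T) : Prop :=
  IsHomeoEmb (Tgraph h) Tr η ∧
  (∀ l : MVert h, (X (η (Sum.inl l))).card = s) ∧
  (∀ t : T, inSpan Tr η t → s ≤ (X t).card)

/-- An injective cascade with common intersection set `I`. -/
def IsInjectiveCascade {V T : Type*} (Tr : SimpleGraph T) (X : T → Finset V) (h s : ℕ)
    (η : TVert h → T) (I : Finset V) : Prop :=
  IsCascade Tr X h s η ∧ I.card < s ∧
  ∀ t t' : TVert h, t ≠ t' → ((X (η t) : Set V) ∩ (X (η t') : Set V)) = (I : Set V)

/-- A family of `s` disjoint paths in `G \ I` (a linkage). -/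
def IsLinkage {V : Type*} (G : SimpleGraph V) (I : Finset V) {s : ℕ} {x y : Fin s → V}
    (P : ∀ i : Fin s, G.Walk (x i) (y i)) : Prop :=
  (∀ i, (P i).IsPath) ∧
  (∀ i, ∀ v ∈ (P i).support, v ∉ I) ∧
  (∀ i j, i ≠ j → ∀ v ∈ (P i).support, v ∉ (P j).support)

/-- An ordered cascade: an injective cascade of size `s + |I|` with common intersection set
`I`, together with orderings `ξ t : Fin s → X (η t) \ I` of the bags at minor vertices, such
that at every major vertex there are left and right linkages connecting corresponding
vertices. -/
def IsOrderedCascade {V T : Type*} (G : SimpleGraph V) (Tr : SimpleGraph T)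
    (X : T → Finset V) (h s : ℕ) (η : TVert h → T) (I : Finset V)
    (ξ : MVert h → Fin s → V) : Prop :=
  IsInjectiveCascade Tr X h (s + I.card) η I ∧
  (∀ t : MVert h, Function.Injective (ξ t) ∧
    Set.range (ξ t) = (X (η (Sum.inl t)) : Set V) \ (I : Set V)) ∧
  ∀ (σ : List Bool) (hσ : σ.length + 1 ≤ h),
    (∃ P : ∀ i : Fin s,
        G.Walk (ξ ⟨σ, Nat.le_of_succ_le hσ⟩ i) (ξ ⟨false :: σ, by simpa using hσ⟩ i),
      IsLinkage G I P) ∧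
    (∃ Q : ∀ i : Fin s,
        G.Walk (ξ ⟨σ, Nat.le_of_succ_le hσ⟩ i) (ξ ⟨true :: σ, by simpa using hσ⟩ i),
      IsLinkage G I Q)

/-- The vertex set of the `η`-torso at the major vertex `σ` of `T_h`: the union of the bags
`X t - I` over all `t` such that the path in `Tr` from `t` to `η σ` contains none of the
images of the three minor neighbors of `σ` as an internal vertex. -/
def torsoSet {V T : Type*} (Tr : SimpleGraph T) (X : T → Finset V) {h : ℕ}
    (η : TVert h → T) (I : Finset V) (σ : List Bool) (hσ : σ.length + 1 ≤ h) : Set V :=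
  {v | v ∉ I ∧ ∃ t : T,
    (∀ p : Tr.Walk t (η (Sum.inr ⟨σ, hσ⟩)), p.IsPath →
      ∀ u : T,
        (u = η (Sum.inl ⟨σ, Nat.le_of_succ_le hσ⟩) ∨
         u = η (Sum.inl ⟨false :: σ, by simpa using hσ⟩) ∨
         u = η (Sum.inl ⟨true :: σ, by simpa using hσ⟩)) →
        u ∈ p.support → u = t ∨ u = η (Sum.inr ⟨σ, hσ⟩)) ∧
    v ∈ X t}

/-- `H` is a tripod in `G` with all vertices in `S`, center `c` and feet `f₁, f₂, f₃`:
the union of three paths from `c` to the feet, pairwise disjoint except for `c`,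
at least two of which have length at least one. -/
def IsTripodOn {V : Type*} (G : SimpleGraph V) (S : Set V) (H : G.Subgraph)
    (c f₁ f₂ f₃ : V) : Prop :=
  ∃ (W₁ : G.Walk c f₁) (W₂ : G.Walk c f₂) (W₃ : G.Walk c f₃),
    W₁.IsPath ∧ W₂.IsPath ∧ W₃.IsPath ∧
    (∀ v ∈ W₁.support, v ∈ S) ∧ (∀ v ∈ W₂.support, v ∈ S) ∧ (∀ v ∈ W₃.support, v ∈ S) ∧
    (∀ v, v ∈ W₁.support → v ∈ W₂.support → v = c) ∧
    (∀ v, v ∈ W₁.support → v ∈ W₃.support → v = c) ∧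
    (∀ v, v ∈ W₂.support → v ∈ W₃.support → v = c) ∧
    ((1 ≤ W₁.length ∧ 1 ≤ W₂.length) ∨ (1 ≤ W₁.length ∧ 1 ≤ W₃.length) ∨
      (1 ≤ W₂.length ∧ 1 ≤ W₃.length)) ∧
    H = W₁.toSubgraph ⊔ W₂.toSubgraph ⊔ W₃.toSubgraph

/-- The major vertex `σ` has property `A_{ij}` in the ordered cascade `η` with orderings
`ξ`: there are two disjoint tripods in the `η`-torso at `σ`, with feet as prescribed. -/
def HasPropA {V T : Type*} (G : SimpleGraph V) (Tr : SimpleGraph T) (X : T → Finset V)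
    {h s : ℕ} (η : TVert h → T) (I : Finset V) (ξ : MVert h → Fin s → V)
    (σ : List Bool) (hσ : σ.length + 1 ≤ h) (i j : Fin s) : Prop :=
  ∃ (Li Lj : G.Subgraph) (ci cj : V),
    (∃ m₂ m₃ : Fin s, (m₂ = i ∨ m₂ = j) ∧ (m₃ = i ∨ m₃ = j) ∧
      IsTripodOn G (torsoSet Tr X η I σ hσ) Li ci
        (ξ ⟨σ, Nat.le_of_succ_le hσ⟩ i)
        (ξ ⟨false :: σ, by simpa using hσ⟩ m₂)
        (ξ ⟨true :: σ, by simpa using hσ⟩ m₃)) ∧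
    (∃ m₂ m₃ : Fin s, (m₂ = i ∨ m₂ = j) ∧ (m₃ = i ∨ m₃ = j) ∧
      IsTripodOn G (torsoSet Tr X η I σ hσ) Lj cj
        (ξ ⟨σ, Nat.le_of_succ_le hσ⟩ j)
        (ξ ⟨false :: σ, by simpa using hσ⟩ m₂)
        (ξ ⟨true :: σ, by simpa using hσ⟩ m₃)) ∧
    Disjoint Li.verts Lj.verts

/-- The major vertex `σ` has property `B_{ij}`: there are two tripods `L_i`, `L_j` in the
`η`-torso at `σ`, with feet `v_{m,1}, v_{m,2}, v_{m,3}` where `{v_{i,y}, v_{j,y}}` equals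
`{ξ_{t_y} i, ξ_{t_y} j}` for each `y`, which intersect exactly in a path that is the
intersection of the branch of `L_i` to `v_{i,3}` and the branch of `L_j` to `v_{j,2}`,
and which avoids both centers. -/
def HasPropB {V T : Type*} (G : SimpleGraph V) (Tr : SimpleGraph T) (X : T → Finset V)
    {h s : ℕ} (η : TVert h → T) (I : Finset V) (ξ : MVert h → Fin s → V)
    (σ : List Bool) (hσ : σ.length + 1 ≤ h) (i j : Fin s) : Prop :=
  ∃ (vi vj : Fin 3 → V) (ci cj : V)
    (Wi : ∀ y : Fin 3, G.Walk ci (vi y)) (Wj : ∀ y : Fin 3, G.Walk cj (vj y)),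
    (∀ y : Fin 3, ({vi y, vj y} : Set V) =
      {(![ξ ⟨σ, Nat.le_of_succ_le hσ⟩,
          ξ ⟨false :: σ, by simpa using hσ⟩,
          ξ ⟨true :: σ, by simpa using hσ⟩] : Fin 3 → Fin s → V) y i,
       (![ξ ⟨σ, Nat.le_of_succ_le hσ⟩,
          ξ ⟨false :: σ, by simpa using hσ⟩,
          ξ ⟨true :: σ, by simpa using hσ⟩] : Fin 3 → Fin s → V) y j}) ∧
    (∀ y, (Wi y).IsPath) ∧ (∀ y, (Wj y).IsPath) ∧
    (∀ y, ∀ v ∈ (Wi y).support, v ∈ torsoSet Tr X η I σ hσ) ∧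
    (∀ y, ∀ v ∈ (Wj y).support, v ∈ torsoSet Tr X η I σ hσ) ∧
    (∀ y y' : Fin 3, y ≠ y' → ∀ v, v ∈ (Wi y).support → v ∈ (Wi y').support → v = ci) ∧
    (∀ y y' : Fin 3, y ≠ y' → ∀ v, v ∈ (Wj y).support → v ∈ (Wj y').support → v = cj) ∧
    ((1 ≤ (Wi 0).length ∧ 1 ≤ (Wi 1).length) ∨ (1 ≤ (Wi 0).length ∧ 1 ≤ (Wi 2).length) ∨
      (1 ≤ (Wi 1).length ∧ 1 ≤ (Wi 2).length)) ∧
    ((1 ≤ (Wj 0).length ∧ 1 ≤ (Wj 1).length) ∨ (1 ≤ (Wj 0).length ∧ 1 ≤ (Wj 2).length) ∨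
      (1 ≤ (Wj 1).length ∧ 1 ≤ (Wj 2).length)) ∧
    (((Wi 0).toSubgraph ⊔ (Wi 1).toSubgraph ⊔ (Wi 2).toSubgraph) ⊓
      ((Wj 0).toSubgraph ⊔ (Wj 1).toSubgraph ⊔ (Wj 2).toSubgraph)
        = (Wi 2).toSubgraph ⊓ (Wj 1).toSubgraph) ∧
    ∃ (x y : V) (p : G.Walk x y), p.IsPath ∧
      (Wi 2).toSubgraph ⊓ (Wj 1).toSubgraph = p.toSubgraph ∧
      ci ∉ p.support ∧ cj ∉ p.support

/-- The major vertex `σ` has property `AB_{ij}`: in the `η`-torso at `σ` there are disjoint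
paths `L_i, L_j` from `ξ_{t₁}(m)` to `ξ_{t₂}(m)` and disjoint paths `R_i, R_j` from
`ξ_{t₁}(m)` to `ξ_{t₃}(m)`, for `m ∈ {i, j}`. -/
def HasPropAB {V T : Type*} (G : SimpleGraph V) (Tr : SimpleGraph T) (X : T → Finset V)
    {h s : ℕ} (η : TVert h → T) (I : Finset V) (ξ : MVert h → Fin s → V)
    (σ : List Bool) (hσ : σ.length + 1 ≤ h) (i j : Fin s) : Prop :=
  ∃ (Li : G.Walk (ξ ⟨σ, Nat.le_of_succ_le hσ⟩ i) (ξ ⟨false :: σ, by simpa using hσ⟩ i))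
    (Lj : G.Walk (ξ ⟨σ, Nat.le_of_succ_le hσ⟩ j) (ξ ⟨false :: σ, by simpa using hσ⟩ j))
    (Ri : G.Walk (ξ ⟨σ, Nat.le_of_succ_le hσ⟩ i) (ξ ⟨true :: σ, by simpa using hσ⟩ i))
    (Rj : G.Walk (ξ ⟨σ, Nat.le_of_succ_le hσ⟩ j) (ξ ⟨true :: σ, by simpa using hσ⟩ j)),
    Li.IsPath ∧ Lj.IsPath ∧ Ri.IsPath ∧ Rj.IsPath ∧
    (∀ v ∈ Li.support, v ∈ torsoSet Tr X η I σ hσ) ∧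
    (∀ v ∈ Lj.support, v ∈ torsoSet Tr X η I σ hσ) ∧
    (∀ v ∈ Ri.support, v ∈ torsoSet Tr X η I σ hσ) ∧
    (∀ v ∈ Rj.support, v ∈ torsoSet Tr X η I σ hσ) ∧
    (∀ v ∈ Li.support, v ∉ Lj.support) ∧
    (∀ v ∈ Ri.support, v ∉ Rj.support)

/-- A monotone homeomorphic embedding `T_a ↪ T_h`: the minor root maps to the minor root,
and for every major vertex with trinity `(t₁, t₂, t₃)`, the images of `t₂` and `t₃` are the
left and right neighbors of the (major) image of the vertex. -/
def IsMonotoneEmb (a h : ℕ) (γ : TVert a → TVert h) : Prop :=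
  IsHomeoEmb (Tgraph a) (Tgraph h) γ ∧
  γ (Sum.inl ⟨[], Nat.zero_le a⟩) = Sum.inl ⟨[], Nat.zero_le h⟩ ∧
  ∀ (σ : List Bool) (hσ : σ.length + 1 ≤ a),
    ∃ (τ : List Bool) (hτ : τ.length + 1 ≤ h),
      γ (Sum.inr ⟨σ, hσ⟩) = Sum.inr ⟨τ, hτ⟩ ∧
      γ (Sum.inl ⟨false :: σ, by simpa using hσ⟩) = Sum.inl ⟨false :: τ, by simpa using hτ⟩ ∧
      γ (Sum.inl ⟨true :: σ, by simpa using hσ⟩) = Sum.inl ⟨true :: τ, by simpa using hτ⟩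

section AuxProof
open SimpleGraph
variable {V : Type} {G : SimpleGraph V}


/-- connected vertex set -/
def Cn (G : SimpleGraph V) (S : Set V) : Prop := (G.induce S).Connected

/-- adjacency of sets -/
def Ad (G : SimpleGraph V) (A B : Set V) : Prop := ∃ u ∈ A, ∃ v ∈ B, G.Adj u v

/-- connected by a walk inside a set -/
def Cw (G : SimpleGraph V) (S : Set V) (u v : V) : Prop :=
  ∃ p : G.Walk u v, ∀ x ∈ p.support, x ∈ S

lemma Ad.symm {A B : Set V} (h : Ad G A B) : Ad G B A := by
  obtain ⟨u, hu, v, hv, h⟩ := h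
  exact ⟨v, hv, u, hu, h.symm⟩

lemma Ad.mono {A B A' B' : Set V} (h : Ad G A B) (hA : A ⊆ A') (hB : B ⊆ B') : Ad G A' B' := by
  obtain ⟨u, hu, v, hv, h⟩ := h
  exact ⟨u, hA hu, v, hB hv, h⟩

lemma Cw.refl {S : Set V} {u : V} (h : u ∈ S) : Cw G S u u :=
  ⟨Walk.nil, by simpa using h⟩

lemma Cw.symm {S : Set V} {u v : V} (h : Cw G S u v) : Cw G S v u := by
  obtain ⟨p, hp⟩ := h
  exact ⟨p.reverse, by simpa using hp⟩

lemma Cw.trans {S : Set V} {u v w : V} (h : Cw G S u v) (h2 : Cw G S v w) : Cw G S u w := by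
  obtain ⟨p, hp⟩ := h
  obtain ⟨q, hq⟩ := h2
  refine ⟨p.append q, fun x hx => ?_⟩
  rw [Walk.mem_support_append_iff] at hx
  exact hx.elim (hp x) (hq x)

lemma Cw.mono {S T : Set V} {u v : V} (h : Cw G S u v) (hS : S ⊆ T) : Cw G T u v := by
  obtain ⟨p, hp⟩ := h
  exact ⟨p, fun x hx => hS (hp x hx)⟩

lemma Cw.monoG {G' : SimpleGraph V} {S : Set V} {u v : V} (h : Cw G S u v) (hG : G ≤ G') :
    Cw G' S u v := by
  obtain ⟨p, hp⟩ := h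
  exact ⟨p.mapLe hG, by simpa using hp⟩

lemma Cw.left {S : Set V} {u v : V} (h : Cw G S u v) : u ∈ S := by
  obtain ⟨p, hp⟩ := h
  exact hp _ p.start_mem_support

lemma Cw.right {S : Set V} {u v : V} (h : Cw G S u v) : v ∈ S := h.symm.left

lemma Cw.adj {S : Set V} {u v : V} (h : G.Adj u v) (hu : u ∈ S) (hv : v ∈ S) : Cw G S u v :=
  ⟨Walk.cons h Walk.nil, by simp [hu, hv]⟩

lemma Cw.step {S : Set V} {u v w : V} (h : Cw G S u v) (h2 : G.Adj v w) (hw : w ∈ S) :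
    Cw G S u w := h.trans (Cw.adj h2 h.right hw)

lemma Cw.exit {S R : Set V} {u v : V} (h : Cw G S u v) (hu : u ∈ R) (hv : v ∉ R) :
    ∃ x y, x ∈ R ∧ y ∉ R ∧ G.Adj x y ∧ x ∈ S ∧ y ∈ S := by
  obtain ⟨p, hp⟩ := h
  obtain ⟨d, hd, h1, h2⟩ := p.exists_boundary_dart R hu hv
  exact ⟨d.fst, d.snd, h1, h2, d.adj, hp _ (p.dart_fst_mem_support_of_mem_darts hd),
    hp _ (p.dart_snd_mem_support_of_mem_darts hd)⟩

lemma Cw.inReach {S : Set V} {u v : V} (h : Cw G S u v) : Cw G {x | Cw G S u x} u v := by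
  classical
  obtain ⟨p, hp⟩ := h
  refine ⟨p, fun x hx => ⟨p.takeUntil x hx, fun y hy => hp _ ?_⟩⟩
  exact p.support_takeUntil_subset_support hx hy

lemma cn_iff {S : Set V} : Cn G S ↔ S.Nonempty ∧ ∀ u ∈ S, ∀ v ∈ S, Cw G S u v := by
  constructor
  · intro h
    have h' : (G.induce S).Connected := h
    refine ⟨Set.nonempty_coe_sort.1 h'.nonempty, fun u hu v hv => ?_⟩
    obtain ⟨p⟩ := h'.preconnected ⟨u, hu⟩ ⟨v, hv⟩
    refine ⟨p.map (Embedding.induce S).toHom, fun x hx => ?_⟩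
    have hx2 : x ∈ p.support.map (Embedding.induce (G := G) S).toHom := by
      have := Walk.support_map (Embedding.induce (G := G) S).toHom p
      exact this ▸ hx
    rw [List.mem_map] at hx2
    obtain ⟨y, _, rfl⟩ := hx2
    exact y.2
  · rintro ⟨⟨u, hu⟩, h⟩
    refine G.induce_connected_of_patches u hu (fun {v} hv => ?_)
    obtain ⟨p, hp⟩ := h u hu v hv
    exact ⟨{x | x ∈ p.support}, hp, p.start_mem_support, p.end_mem_support,
      p.connected_induce_support.preconnected _ _⟩

lemma Cn.nonempty {S : Set V} (h : Cn G S) : S.Nonempty := (cn_iff.1 h).1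

lemma Cn.con {S : Set V} (h : Cn G S) {u v : V} (hu : u ∈ S) (hv : v ∈ S) : Cw G S u v :=
  (cn_iff.1 h).2 u hu v hv

lemma cn_of {S : Set V} (u : V) (hu : u ∈ S) (h : ∀ v ∈ S, Cw G S u v) : Cn G S :=
  cn_iff.2 ⟨⟨u, hu⟩, fun x hx y hy => (h x hx).symm.trans (h y hy)⟩

lemma cn_singleton (u : V) : Cn G {u} :=
  cn_of u rfl (by rintro v rfl; exact Cw.refl rfl)

lemma Cn.union_inter {S T : Set V} (hS : Cn G S) (hT : Cn G T) (h : (S ∩ T).Nonempty) :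
    Cn G (S ∪ T) := by
  obtain ⟨x, h1, h2⟩ := h
  refine cn_of x (Or.inl h1) ?_
  rintro v (hv | hv)
  · exact (hS.con h1 hv).mono Set.subset_union_left
  · exact (hT.con h2 hv).mono Set.subset_union_right

lemma Cn.union_ad {S T : Set V} (hS : Cn G S) (hT : Cn G T) (h : Ad G S T) :
    Cn G (S ∪ T) := by
  obtain ⟨x, h1, y, h2, h⟩ := h
  refine cn_of x (Or.inl h1) ?_
  rintro v (hv | hv)
  · exact (hS.con h1 hv).mono Set.subset_union_left
  · exact (Cw.adj h (Or.inl h1) (Or.inr h2)).trans ((hT.con h2 hv).mono Set.subset_union_right)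

lemma Cn.monoG {G' : SimpleGraph V} {S : Set V} (h : Cn G S) (hG : G ≤ G') : Cn G' S :=
  cn_iff.2 ⟨h.nonempty, fun _ hu _ hv => (h.con hu hv).monoG hG⟩

lemma cn_reach {S : Set V} {u : V} (hu : u ∈ S) : Cn G {x | Cw G S u x} :=
  cn_of u (Cw.refl hu) fun _ hv => Cw.inReach hv

/-- two disjoint covering nonempty parts of a connected set are adjacent -/
lemma Cn.ad_of_cover {S A B : Set V} (h : Cn G S) (hA : (S ∩ A).Nonempty) (hB : (S ∩ B).Nonempty)
    (hd : Disjoint A B) (hc : S ⊆ A ∪ B) : Ad G (S ∩ A) (S ∩ B) := by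
  obtain ⟨a, ha, ha'⟩ := hA
  obtain ⟨b, hb, hb'⟩ := hB
  obtain ⟨x, y, hx, hy, hxy, hxS, hyS⟩ := (h.con ha hb).exit ha' (Set.disjoint_right.1 hd hb')
  exact ⟨x, ⟨hxS, hx⟩, y, ⟨hyS, (hc hyS).resolve_left hy⟩, hxy⟩

/-- first hit -/
lemma Cw.firstHit {S T : Set V} {u v : V} (h : Cw G S u v) (hv : v ∈ T) :
    ∃ q ∈ T, q ∈ S ∧ ∃ P ⊆ S, Cn G P ∧ u ∈ P ∧ q ∈ P ∧
      ∀ x ∈ P, x ≠ q → Cw G (S \ T) u x := by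
  by_cases hu : u ∈ T
  · exact ⟨u, hu, h.left, {u}, by simpa using h.left, cn_singleton u, rfl, rfl,
      fun x hx hne => (hne hx).elim⟩
  · have huS : u ∈ S \ T := ⟨h.left, hu⟩
    obtain ⟨x, y, hx, hy, hxy, hxS, hyS⟩ := h.exit (R := {x | Cw G (S \ T) u x})
      (Cw.refl huS) (fun hc => hc.right.2 hv)
    have hyT : y ∈ T := by
      by_contra hyT
      exact hy (Cw.step hx hxy ⟨hyS, hyT⟩)
    refine ⟨y, hyT, hyS, {x | Cw G (S \ T) u x} ∪ {y}, ?_, ?_, Or.inl (Cw.refl huS), Or.inr rfl, ?_⟩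
    · rintro z (hz | rfl)
      · exact hz.right.1
      · exact hyS
    · exact (cn_reach huS).union_ad (cn_singleton y) ⟨x, hx, y, rfl, hxy⟩
    · rintro z (hz | rfl) hne
      · exact hz
      · exact (hne rfl).elim

section Menger

lemma menger_aux1 {D : Set V} {k : ℕ} {G' : SimpleGraph V} {A B : Set V} {x y : V}
    (hGG : ∀ u v, G.Adj u v → ¬ G'.Adj u v → (u = x ∧ v = y) ∨ (u = y ∧ v = x))
    {S' : Finset V}
    (hsep : ∀ a ∈ A, ∀ b ∈ B, ¬ Cw G' (D \ S') a b)
    (hy : ∀ a ∈ A, ¬ Cw G' (D \ S') a y)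
    (h : ∀ T : Finset V, T.card < k → ∃ a ∈ A, ∃ b ∈ B, Cw G (D \ T) a b)
    (T : Finset V) (hT : T.card < k) :
    ∃ a ∈ A, ∃ s ∈ (insert x (S' : Set V)), Cw G' (D \ T) a s := by
  by_contra hcon
  push Not at hcon
  obtain ⟨a, ha, b, hb, hab⟩ := h T hT
  have key : ∀ a ∈ A, ∀ v, Cw G' (D \ T) a v → Cw G' (D \ S') a v := by
    intro a ha v hv
    refine hv.inReach.mono ?_
    intro z hz
    refine ⟨Cw.right hz |>.1, fun hzS => ?_⟩
    exact hcon a ha z (Or.inr hzS) hz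
  obtain ⟨c, d, ⟨a', ha', hc⟩, hd, hcd, hcS, hdS⟩ := hab.exit
    (R := {v | ∃ a ∈ A, Cw G' (D \ T) a v}) ⟨a, ha, Cw.refl hab.left⟩
    (by rintro ⟨a', ha', h'⟩; exact hsep a' ha' b hb (key a' ha' b h'))
  rcases hGG c d hcd (fun h => hd ⟨a', ha', hc.step h hdS⟩) with ⟨rfl, rfl⟩ | ⟨rfl, rfl⟩
  · exact hcon a' ha' c (Or.inl rfl) hc
  · exact hy a' ha' (key a' ha' _ hc)

lemma menger_aux2 {D : Set V} {k : ℕ} {A : Set V} (S : Finset V) (hS : S.card ≤ k)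
    (h : ∃ P : Fin k → Set V, (∀ i, P i ⊆ D ∧ Cn G (P i) ∧ (P i ∩ A).Nonempty ∧
      (P i ∩ S).Nonempty) ∧ ∀ i j, i ≠ j → Disjoint (P i) (P j)) :
    S.card = k ∧ ∃ P : V → Set V, (∀ s ∈ S, P s ⊆ D ∧ Cn G (P s) ∧ (P s ∩ A).Nonempty ∧ s ∈ P s ∧
      ∀ x ∈ P s, x ≠ s → ∃ a ∈ A, Cw G (D \ S) a x) ∧ ∀ s ∈ S, ∀ t ∈ S, s ≠ t → Disjoint (P s) (P t) := by
  classical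
  obtain ⟨P, hP, hd⟩ := h
  have h1 : ∀ i, ∃ s ∈ S, ∃ Q ⊆ P i, Cn G Q ∧ (Q ∩ A).Nonempty ∧ s ∈ Q ∧
      ∀ x ∈ Q, x ≠ s → ∃ a ∈ A, Cw G (D \ S) a x := by
    intro i
    obtain ⟨hD, hC, ⟨a, haP, haA⟩, ⟨s, hsP, hsS⟩⟩ := hP i
    obtain ⟨q, hqS, _, Q, hQ, hQC, haQ, hqQ, hx⟩ := (hC.con haP hsP).firstHit hsS
    exact ⟨q, hqS, Q, hQ, hQC, ⟨a, haQ, haA⟩, hqQ, fun x hxQ hne =>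
      ⟨a, haA, (hx x hxQ hne).mono (Set.sdiff_subset_sdiff_left hD)⟩⟩
  choose s hsS Q hQP hQ using h1
  have hQd : ∀ i j, i ≠ j → Disjoint (Q i) (Q j) := fun i j hij =>
    (hd i j hij).mono (hQP i) (hQP j)
  have hinj : Function.Injective s := by
    intro i j hij
    by_contra hne
    exact Set.disjoint_left.1 (hQd i j hne) (hQ i).2.2.1 (hij ▸ (hQ j).2.2.1)
  have him : Finset.univ.image s = S := by
    apply Finset.eq_of_subset_of_card_le
    · intro x hx
      obtain ⟨i, _, rfl⟩ := Finset.mem_image.1 hx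
      exact hsS i
    · rw [Finset.card_image_of_injective _ hinj]
      simpa using hS
  refine ⟨by rw [← him, Finset.card_image_of_injective _ hinj]; simp, ?_⟩
  have hsur : ∀ v ∈ S, ∃ i, s i = v := by
    intro v hv
    rw [← him] at hv
    obtain ⟨i, _, h⟩ := Finset.mem_image.1 hv
    exact ⟨i, h⟩
  have hsur' : ∀ v, ∃ X : Set V, ∀ i, s i = v → X = Q i := by
    intro v
    by_cases hv : ∃ i, s i = v
    · obtain ⟨i, hi⟩ := hv
      exact ⟨Q i, fun j hj => by rw [hinj (hj.trans hi.symm)]⟩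
    · exact ⟨∅, fun i hi => (hv ⟨i, hi⟩).elim⟩
  choose R hR using hsur'
  refine ⟨R, ?_, ?_⟩
  · intro v hv
    obtain ⟨i, rfl⟩ := hsur v hv
    rw [hR _ i rfl]
    exact ⟨(hQP i).trans (hP i).1, hQ i⟩
  · intro v hv w hw hne
    obtain ⟨i, rfl⟩ := hsur v hv
    obtain ⟨j, rfl⟩ := hsur w hw
    rw [hR _ i rfl, hR _ j rfl]
    exact hQd i j (fun h => hne (h ▸ rfl))

theorem menger [Finite V] (D : Set V) (k : ℕ) (G : SimpleGraph V) : ∀ (A B : Set V),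
    (∀ T : Finset V, T.card < k → ∃ a ∈ A, ∃ b ∈ B, Cw G (D \ T) a b) →
    ∃ P : Fin k → Set V, (∀ i, P i ⊆ D ∧ Cn G (P i) ∧ (P i ∩ A).Nonempty ∧ (P i ∩ B).Nonempty) ∧
      ∀ i j, i ≠ j → Disjoint (P i) (P j) := by
  classical
  have hwf : WellFoundedLT (SimpleGraph V) := Finite.to_wellFoundedLT
  induction G using hwf.induction with
  | ind G ih =>
  intro A B h
  by_cases hG : ∃ x y, G.Adj x y
  swap
  · push Not at hG
    have hfin : (A ∩ B ∩ D).Finite := Set.toFinite _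
    have hcard : k ≤ hfin.toFinset.card := by
      by_contra hlt
      obtain ⟨a, ha, b, hb, hab⟩ := h hfin.toFinset (by omega)
      by_cases hne : a = b
      · subst hne
        exact hab.left.2 (by simpa using ⟨⟨ha, hb⟩, hab.left.1⟩)
      · obtain ⟨x, y, _, _, hxy, _⟩ := hab.exit (R := {a}) rfl (fun h => hne h.symm)
        exact hG x y hxy
    obtain ⟨S, hS, hSk⟩ := Finset.exists_subset_card_eq hcard
    let e := (S.equivFin.trans (finCongr hSk)).symm
    have he : ∀ i, (e i : V) ∈ A ∩ B ∩ D := fun i => by simpa using hS (e i).2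
    refine ⟨fun i => {(e i : V)}, fun i => ⟨by simpa using (he i).2, cn_singleton _,
      ⟨e i, rfl, (he i).1.1⟩, ⟨e i, rfl, (he i).1.2⟩⟩, fun i j hij => ?_⟩
    rw [Set.disjoint_singleton]
    intro hc
    exact hij (e.injective (Subtype.ext hc))
  obtain ⟨x0, y0, hxy0⟩ := hG
  set G' := G.deleteEdges {s(x0, y0)} with hG'
  have hle : G' ≤ G := deleteEdges_le _
  have hlt : G' < G := by
    refine lt_of_le_of_ne hle (fun hc => ?_)
    have : G'.Adj x0 y0 := hc ▸ hxy0
    rw [hG', deleteEdges_adj] at this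
    exact this.2 rfl
  by_cases hG2 : ∀ T : Finset V, T.card < k → ∃ a ∈ A, ∃ b ∈ B, Cw G' (D \ T) a b
  · obtain ⟨P, hP, hd⟩ := ih G' hlt A B hG2
    exact ⟨P, fun i => ⟨(hP i).1, (hP i).2.1.monoG hle, (hP i).2.2⟩, hd⟩
  push Not at hG2
  obtain ⟨S', hS', hsep⟩ := hG2
  have hdiff : ∀ u v, G.Adj u v → ¬ G'.Adj u v → s(u, v) = s(x0, y0) := by
    intro u v h1 h2
    by_contra h3
    exact h2 (by rw [hG', deleteEdges_adj]; exact ⟨h1, h3⟩)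
  have hdisj : ∀ v, (∃ a ∈ A, Cw G' (D \ S') a v) → (∃ b ∈ B, Cw G' (D \ S') b v) → False := by
    rintro v ⟨a, ha, h1⟩ ⟨b, hb, h2⟩
    exact hsep a ha b hb (h1.trans h2.symm)
  obtain ⟨a, ha, b, hb, hab⟩ := h S' hS'
  obtain ⟨x, y, ⟨ax, hax, hx⟩, hy, hxy, hxS, hyS⟩ := hab.exit
    (R := {v | ∃ a ∈ A, Cw G' (D \ S') a v}) ⟨a, ha, Cw.refl hab.left⟩
    (by rintro ⟨a', ha', h'⟩; exact hsep a' ha' b hb h')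
  have hxye : s(x, y) = s(x0, y0) := hdiff x y hxy (fun h => hy ⟨ax, hax, hx.step h hyS⟩)
  have hyB : ∃ b ∈ B, Cw G' (D \ S') b y := by
    obtain ⟨y', x', ⟨b', hb', hy'⟩, hx', hxy', hyS', hxS'⟩ := hab.symm.exit
      (R := {v | ∃ b ∈ B, Cw G' (D \ S') b v}) ⟨b, hb, Cw.refl hab.right⟩
      (by rintro ⟨b', hb', h'⟩; exact hsep a ha b' hb' h'.symm)
    have := hdiff y' x' hxy' (fun h => hx' ⟨b', hb', hy'.step h hxS'⟩)
    rw [← hxye, Sym2.eq_iff] at this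
    rcases this with ⟨rfl, rfl⟩ | ⟨rfl, rfl⟩
    · exact (hdisj y' ⟨ax, hax, hx⟩ ⟨b', hb', hy'⟩).elim
    · exact ⟨b', hb', hy'⟩
  have hGG : ∀ u v, G.Adj u v → ¬ G'.Adj u v → (u = x ∧ v = y) ∨ (u = y ∧ v = x) := by
    intro u v h1 h2
    have := hdiff u v h1 h2
    rwa [← hxye, Sym2.eq_iff] at this
  have H1 := menger_aux2 (G := G') (D := D) (k := k) (A := A) (insert x S')
    ((Finset.card_insert_le _ _).trans hS') (by
      apply ih G' hlt
      have := menger_aux1 hGG hsep (fun a ha h => hy ⟨a, ha, h⟩) h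
      simpa using this)
  have H2 := menger_aux2 (G := G') (D := D) (k := k) (A := B) (insert y S')
    ((Finset.card_insert_le _ _).trans hS') (by
      apply ih G' hlt
      have := menger_aux1 (x := y) (y := x) (A := B) (B := A) (k := k) (D := D) (S' := S') (G := G)
        (G' := G') (fun u v h1 h2 => (hGG u v h1 h2).symm)
        (fun b hb a ha h => hsep a ha b hb h.symm)
        (fun b hb h => hdisj x ⟨ax, hax, hx⟩ ⟨b, hb, h⟩)
        (fun T hT => by
          obtain ⟨a, ha, b, hb, h⟩ := h T hT
          exact ⟨b, hb, a, ha, h.symm⟩)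
      simpa using this)
  obtain ⟨hcard, P, hP, hPd⟩ := H1
  obtain ⟨_, Q, hQ, hQd⟩ := H2
  have hPr : ∀ s ∈ insert x S', ∀ u ∈ P s, u ≠ s → ∃ a ∈ A, Cw G' (D \ S') a u := by
    intro s hs u hu hne
    obtain ⟨a, ha, h⟩ := (hP s hs).2.2.2.2 u hu hne
    exact ⟨a, ha, h.mono (Set.sdiff_subset_sdiff_right (by simp))⟩
  have hQr : ∀ s ∈ insert y S', ∀ u ∈ Q s, u ≠ s → ∃ a ∈ B, Cw G' (D \ S') a u := by
    intro s hs u hu hne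
    obtain ⟨a, ha, h⟩ := (hQ s hs).2.2.2.2 u hu hne
    exact ⟨a, ha, h.mono (Set.sdiff_subset_sdiff_right (by simp))⟩
  let m : V → V := fun s => if s = x then y else s
  have hm : ∀ s ∈ insert x S', m s ∈ insert y S' := by
    intro s hs
    by_cases hsx : s = x
    · simp [m, hsx]
    · simp only [m, hsx, if_false]
      exact Finset.mem_insert_of_mem ((Finset.mem_insert.1 hs).resolve_left hsx)
  have hyS2 : y ∉ S' := hyS.2
  have hxS2 : x ∉ S' := hxS.2
  have hminj : ∀ s ∈ insert x S', ∀ t ∈ insert x S', s ≠ t → m s ≠ m t := by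
    intro s hs t ht hne
    simp only [m]
    rw [Finset.mem_insert] at hs ht
    split_ifs with h1 h2 h2
    · exact fun _ => hne (h1.trans h2.symm)
    · rintro rfl; exact hyS2 (ht.resolve_left h2)
    · rintro rfl; exact hyS2 (hs.resolve_left h1)
    · exact hne
  have hcross : ∀ s ∈ insert x S', ∀ t ∈ insert x S', s ≠ t → Disjoint (P s) (Q (m t)) := by
    intro s hs t ht hne
    rw [Set.disjoint_left]
    intro u hu1 hu2
    by_cases h1 : u = s
    · subst h1
      have hut : u ≠ m t := by
        simp only [m]
        split_ifs with h2
        · rintro rfl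
          rcases Finset.mem_insert.1 hs with h3 | h3
          · exact G.loopless.irrefl _ (h3 ▸ hxy)
          · exact hyS2 h3
        · exact hne
      obtain ⟨b', hb', hc⟩ := hQr _ (hm t ht) u hu2 hut
      rcases Finset.mem_insert.1 hs with h3 | h3
      · subst h3
        exact hdisj u ⟨ax, hax, hx⟩ ⟨b', hb', hc⟩
      · exact hc.right.2 h3
    · obtain ⟨a', ha', hc⟩ := hPr s hs u hu1 h1
      by_cases h2 : u = m t
      · rcases Finset.mem_insert.1 (hm t ht) with h3 | h3
        · exact hy ⟨a', ha', by rw [← h3, ← h2]; exact hc⟩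
        · exact hc.right.2 (by rw [h2]; exact h3)
      · exact hdisj u ⟨a', ha', hc⟩ (hQr _ (hm t ht) u hu2 h2)
  let e := ((insert x S').equivFin.trans (finCongr hcard)).symm
  refine ⟨fun i => P (e i) ∪ Q (m (e i)), fun i => ?_, fun i j hij => ?_⟩
  · have hs := (e i).2
    obtain ⟨p1, p2, p3, p4, _⟩ := hP _ hs
    obtain ⟨q1, q2, q3, q4, _⟩ := hQ _ (hm _ hs)
    refine ⟨Set.union_subset p1 q1, ?_, p3.mono (Set.inter_subset_inter_left _ Set.subset_union_left),
      q3.mono (Set.inter_subset_inter_left _ Set.subset_union_right)⟩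
    by_cases hsx : (e i : V) = x
    · have hm1 : m (e i) = y := by simp [m, hsx]
      refine (p2.monoG hle).union_ad (q2.monoG hle) ⟨x, ?_, y, ?_, hxy⟩
      · rw [hsx] at p4; rw [hsx]; exact p4
      · rw [hm1] at q4 ⊢; exact q4
    · have hm1 : m (e i) = e i := by simp [m, hsx]
      refine (p2.monoG hle).union_inter (q2.monoG hle) ⟨e i, p4, ?_⟩
      rw [hm1] at q4 ⊢; exact q4
  · have hne : (e i : V) ≠ e j := fun h => hij (e.injective (Subtype.ext h))
    have hi := (e i).2
    have hj := (e j).2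
    rw [Set.disjoint_union_left, Set.disjoint_union_right, Set.disjoint_union_right]
    exact ⟨⟨hPd _ hi _ hj hne, hcross _ hi _ hj hne⟩, (hcross _ hj _ hi hne.symm).symm,
      hQd _ (hm _ hi) _ (hm _ hj) (hminj _ hi _ hj hne)⟩

end Menger



section PW
open Classical in
/-- boundary of a set -/
noncomputable def bdy (G : SimpleGraph V) (X : Finset V) : Finset V :=
  X.filter (fun v => ∃ u, u ∉ X ∧ G.Adj v u)

lemma mem_bdy {X : Finset V} {v : V} : v ∈ bdy G X ↔ v ∈ X ∧ ∃ u, u ∉ X ∧ G.Adj v u := by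
  simp [bdy]

def Good (G : SimpleGraph V) (n : ℕ) (X : Finset V) : Prop :=
  ∃ (m : ℕ) (W : ℕ → Finset V),
    (∀ i ≤ m, W i ⊆ X ∧ (W i).card ≤ n) ∧ (∀ v ∈ X, ∃ i ≤ m, v ∈ W i) ∧
    (∀ u ∈ X, ∀ v ∈ X, G.Adj u v → ∃ i ≤ m, u ∈ W i ∧ v ∈ W i) ∧
    (∀ i j l, i ≤ j → j ≤ l → l ≤ m → ∀ v, v ∈ W i → v ∈ W l → v ∈ W j) ∧ bdy G X ⊆ W m

lemma good_empty (n : ℕ) : Good G n ∅ :=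
  ⟨0, fun _ => ∅, by simp, by simp, by simp, by simp, by intro v hv; simp [mem_bdy] at hv⟩

lemma good_insert [DecidableEq V] {n : ℕ} {X : Finset V} (h : Good G n X)
    (hc : (bdy G X).card + 1 ≤ n) {x : V} (hx : x ∉ X) : Good G n (insert x X) := by
  obtain ⟨m, W, h1, h2, h3, h4, h5⟩ := h
  have hbX : bdy G X ⊆ X := fun v hv => (mem_bdy.1 hv).1
  have key : ∀ v ∈ X, G.Adj v x → v ∈ bdy G X := fun v hv ha => mem_bdy.2 ⟨hv, x, hx, ha⟩
  refine ⟨m + 1, fun i => if i ≤ m then W i else insert x (bdy G X), ?_, ?_, ?_, ?_, ?_⟩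
  · intro i hi
    dsimp only
    split_ifs with him
    · exact ⟨(h1 i him).1.trans (Finset.subset_insert _ _), (h1 i him).2⟩
    · exact ⟨Finset.insert_subset_insert _ hbX, (Finset.card_insert_le _ _).trans hc⟩
  · intro v hv
    rcases Finset.mem_insert.1 hv with rfl | hv
    · exact ⟨m + 1, le_rfl, by simp⟩
    · obtain ⟨i, hi, h⟩ := h2 v hv
      exact ⟨i, by omega, by simp [hi, h]⟩
  · intro u hu v hv ha
    rcases Finset.mem_insert.1 hv with rfl | hv
    · rcases Finset.mem_insert.1 hu with rfl | hu
      · exact (G.loopless.irrefl _ ha).elim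
      · exact ⟨m + 1, le_rfl, by simp [key u hu ha]⟩
    · rcases Finset.mem_insert.1 hu with hux | hu
      · subst hux
        have := key v (by assumption) ha.symm
        exact ⟨m + 1, le_rfl, by simp [this]⟩
      · obtain ⟨i, hi, h⟩ := h3 u hu v hv ha
        exact ⟨i, by omega, by simpa [hi] using h⟩
  · intro i j l hij hjl hl v hvi hvl
    by_cases hlm : l ≤ m
    · have hjm : j ≤ m := hjl.trans hlm
      have him : i ≤ m := hij.trans hjm
      simp only [hlm, hjm, him, if_true] at hvi hvl ⊢
      exact h4 i j l hij hjl hlm v hvi hvl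
    · by_cases hjm : j ≤ m
      · have him : i ≤ m := hij.trans hjm
        simp only [hlm, hjm, him, if_true, if_false] at hvi hvl ⊢
        rcases Finset.mem_insert.1 hvl with rfl | hv
        · exact (hx ((h1 i him).1 hvi)).elim
        · exact h4 i j m hij hjm le_rfl v hvi (h5 hv)
      · simp only [hjm, hlm, if_false] at hvl ⊢
        exact hvl
  · intro v hv
    rw [mem_bdy] at hv
    obtain ⟨hv, u, hu, ha⟩ := hv
    simp only [Finset.mem_insert, not_or] at hu
    simp only [show ¬ (m + 1 ≤ m) by omega, if_false]
    rcases Finset.mem_insert.1 hv with rfl | hv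
    · simp
    · exact Finset.mem_insert_of_mem (mem_bdy.2 ⟨hv, u, hu.2, ha⟩)

lemma good_univ [Fintype V] {n : ℕ} (hn : 1 ≤ n) (h : Good G n Finset.univ) :
    pathwidth G ≤ n - 1 := by
  obtain ⟨m, W, h1, h2, h3, h4, h5⟩ := h
  apply Nat.sInf_le
  refine ⟨m + 1, fun i => W i, ⟨?_, ?_, ?_⟩, ?_⟩
  · intro v
    obtain ⟨i, hi, h⟩ := h2 v (Finset.mem_univ _)
    exact ⟨⟨i, by omega⟩, h⟩
  · intro u v ha
    obtain ⟨i, hi, h⟩ := h3 u (Finset.mem_univ _) v (Finset.mem_univ _) ha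
    exact ⟨⟨i, by omega⟩, h⟩
  · intro i j l hij hjl v hi hl
    exact h4 i j l hij hjl (by omega) v hi hl
  · intro i
    have := (h1 i (by omega)).2
    dsimp only
    omega

lemma good_transfer {n : ℕ} {Y Z : Finset V} (h : Good G n Y) (hZ : Z ⊆ Y) (P : V → Set V)
    (hP : ∀ s ∈ bdy G Z, P s ⊆ Y ∧ Cn G (P s) ∧ s ∈ P s ∧ (∀ x ∈ P s, x ∈ Z → x = s) ∧
      ∃ x ∈ P s, x ∈ bdy G Y)
    (hd : ∀ s ∈ bdy G Z, ∀ t ∈ bdy G Z, s ≠ t → Disjoint (P s) (P t)) : Good G n Z := by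
  classical
  obtain ⟨m, W, h1, h2, h3, h4, h5⟩ := h
  have hmem : ∀ v ∈ Z, ∀ i, v ∈ W i →
      (v ∉ bdy G Z ∧ v ∈ W i) ∨ (v ∈ bdy G Z ∧ ∃ x ∈ P v, x ∈ W i) := by
    intro v hv i hi
    by_cases hb : v ∈ bdy G Z
    · exact Or.inr ⟨hb, v, (hP v hb).2.2.1, hi⟩
    · exact Or.inl ⟨hb, hi⟩
  refine ⟨m, fun i => Z.filter (fun v => (v ∉ bdy G Z ∧ v ∈ W i) ∨
    (v ∈ bdy G Z ∧ ∃ x ∈ P v, x ∈ W i)), ?_, ?_, ?_, ?_, ?_⟩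
  · intro i hi
    refine ⟨Finset.filter_subset _ _, le_trans ?_ (h1 i hi).2⟩
    have hch : ∀ v, ∃ x, v ∈ Z → ((v ∉ bdy G Z ∧ v ∈ W i) ∨ (v ∈ bdy G Z ∧ ∃ x ∈ P v, x ∈ W i)) →
        x ∈ W i ∧ ((v ∉ bdy G Z ∧ x = v) ∨ (v ∈ bdy G Z ∧ x ∈ P v)) := by
      intro v
      by_cases hb : v ∈ bdy G Z
      · by_cases hx : ∃ x ∈ P v, x ∈ W i
        · obtain ⟨x, hx1, hx2⟩ := hx
          exact ⟨x, fun _ _ => ⟨hx2, Or.inr ⟨hb, hx1⟩⟩⟩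
        · exact ⟨v, fun _ h => (h.elim (fun h => h.1 hb) (fun h => hx h.2)).elim⟩
      · exact ⟨v, fun _ h => by tauto⟩
    choose f hf using hch
    apply Finset.card_le_card_of_injOn f
    · intro v hv
      have hv' := Finset.mem_filter.1 hv
      exact (hf v hv'.1 hv'.2).1
    · intro v hv w hw hvw
      have hv' := Finset.mem_filter.1 hv
      have hw' := Finset.mem_filter.1 hw
      have a1 := (hf v hv'.1 hv'.2).2
      have a2 := (hf w hw'.1 hw'.2).2
      by_contra hne
      rcases a1 with ⟨b1, c1⟩ | ⟨b1, c1⟩ <;> rcases a2 with ⟨b2, c2⟩ | ⟨b2, c2⟩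
      · exact hne (c1.symm.trans (hvw.trans c2))
      · rw [← hvw, c1] at c2
        exact hne ((hP w b2).2.2.2.1 v c2 hv'.1)
      · rw [hvw, c2] at c1
        exact hne ((hP v b1).2.2.2.1 w c1 hw'.1).symm
      · rw [hvw] at c1
        exact Set.disjoint_left.1 (hd v b1 w b2 hne) c1 c2
  · intro v hv
    obtain ⟨i, hi, h⟩ := h2 v (hZ hv)
    exact ⟨i, hi, Finset.mem_filter.2 ⟨hv, hmem v hv i h⟩⟩
  · intro u hu v hv ha
    obtain ⟨i, hi, ha1, ha2⟩ := h3 u (hZ hu) v (hZ hv) ha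
    exact ⟨i, hi, Finset.mem_filter.2 ⟨hu, hmem u hu i ha1⟩,
      Finset.mem_filter.2 ⟨hv, hmem v hv i ha2⟩⟩
  · intro i j l hij hjl hl v hvi hvl
    obtain ⟨hvZ, hvi⟩ := Finset.mem_filter.1 hvi
    obtain ⟨_, hvl⟩ := Finset.mem_filter.1 hvl
    refine Finset.mem_filter.2 ⟨hvZ, ?_⟩
    by_cases hb : v ∈ bdy G Z
    · obtain ⟨_, x, hxP, hxi⟩ := hvi.resolve_left (fun h => h.1 hb)
      obtain ⟨_, y, hyP, hyl⟩ := hvl.resolve_left (fun h => h.1 hb)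
      refine Or.inr ⟨hb, ?_⟩
      by_contra hno
      push Not at hno
      obtain ⟨hPY, hPC, _⟩ := hP v hb
      obtain ⟨z, z', ⟨i', hi', hz⟩, hz', hadj, hzP, hzP'⟩ := (hPC.con hxP hyP).exit
        (R := {z | ∃ i' ≤ j, z ∈ W i'}) ⟨i, hij, hxi⟩
        (by rintro ⟨i', hi', h⟩; exact hno y hyP (h4 i' j l hi' hjl hl y h hyl))
      obtain ⟨t, ht, hzt, hzt'⟩ := h3 z (hPY hzP) z' (hPY hzP') hadj
      by_cases htj : t ≤ j
      · exact hz' ⟨t, htj, hzt'⟩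
      · exact hno z hzP (h4 i' j t hi' (by omega) ht z hz hzt)
    · exact Or.inl ⟨hb, h4 i j l hij hjl hl v (hvi.resolve_right (fun h => hb h.1)).2
        (hvl.resolve_right (fun h => hb h.1)).2⟩
  · intro s hs
    obtain ⟨_, _, _, _, x, hx, hxY⟩ := hP s hs
    exact Finset.mem_filter.2 ⟨(mem_bdy.1 hs).1, Or.inr ⟨hs, x, hx, h5 hxY⟩⟩

def TInv (G : SimpleGraph V) (n i : ℕ) : Prop :=
  ∃ X : Finset V, Good G n X ∧ (bdy G X).card = i ∧
    (∀ Y, X ⊆ Y → Good G n Y → (bdy G Y).card ≤ i → Y = X) ∧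
    ∃ (x : ℕ → V) (U : ℕ → Set V),
      (∀ j < i, x j ∈ bdy G X ∧ Cn G (U j) ∧ U j ⊆ X ∧ x j ∈ U j) ∧
      (∀ j < i, ∀ l < i, j ≠ l → Disjoint (U j) (U l)) ∧
      (∀ j, 1 ≤ j → j < i → Ad G (U j) (U ((j - 1) / 2)))

lemma exists_max_good [Finite V] {n i : ℕ} {X : Finset V} (h : Good G n X)
    (hc : (bdy G X).card ≤ i) : ∃ Y, X ⊆ Y ∧ Good G n Y ∧ (bdy G Y).card ≤ i ∧
      ∀ Z, Y ⊆ Z → Good G n Z → (bdy G Z).card ≤ i → Z = Y := by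
  have := Fintype.ofFinite V
  obtain ⟨Y, hXY, hY⟩ := Finite.exists_le_maximal (p := fun Y : Finset V => Good G n Y ∧ (bdy G Y).card ≤ i)
    (a := X) ⟨h, hc⟩
  exact ⟨Y, hXY, hY.prop.1, hY.prop.2, fun Z hZ h1 h2 => (hY.eq_of_le ⟨h1, h2⟩ hZ).symm⟩

lemma inv_step [Fintype V] {n i : ℕ} (hi : i < n) (hpw : n ≤ pathwidth G) (h : TInv G n i) :
    TInv G n (i + 1) := by
  classical
  obtain ⟨X, hX, hXc, hXm, x, U, hU, hUd, hUa⟩ := h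
  have hXu : X ≠ Finset.univ := by
    rintro rfl
    have := good_univ (by omega) hX
    omega
  have hbX : bdy G X ⊆ X := fun v hv => (mem_bdy.1 hv).1
  obtain ⟨y, hyX, hya⟩ : ∃ y, y ∉ X ∧ (1 ≤ i → G.Adj (x ((i - 1) / 2)) y) := by
    by_cases h1 : 1 ≤ i
    · obtain ⟨_, u, hu, ha⟩ := mem_bdy.1 (hU ((i - 1) / 2) (by omega)).1
      exact ⟨u, hu, fun _ => ha⟩
    · by_contra hno
      push Not at hno
      apply hXu
      ext v
      simp only [Finset.mem_univ, iff_true]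
      by_contra hv
      exact h1 (hno v hv).1
  have hG1 : Good G n (insert y X) := good_insert hX (by omega) hyX
  have hbd1 : bdy G (insert y X) ⊆ insert y (bdy G X) := by
    intro v hv
    obtain ⟨hv, u, hu, ha⟩ := mem_bdy.1 hv
    simp only [Finset.mem_insert, not_or] at hu hv ⊢
    exact hv.imp id (fun hv => mem_bdy.2 ⟨hv, u, hu.2, ha⟩)
  have hAc : (insert y (bdy G X)).card = i + 1 := by
    rw [Finset.card_insert_of_notMem (fun h => hyX (hbX h)), hXc]
  obtain ⟨Y, hXY, hY, hYc, hYm⟩ := exists_max_good hG1 (i := i + 1)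
    ((Finset.card_le_card hbd1).trans hAc.le)
  have hXY' : X ⊆ Y := (Finset.subset_insert _ _).trans hXY
  have hyY : y ∈ Y := hXY (Finset.mem_insert_self _ _)
  have hbY : bdy G Y ⊆ Y := fun v hv => (mem_bdy.1 hv).1
  set D : Set V := {v | v ∈ Y ∧ (v ∈ X → v ∈ bdy G X)} with hD
  set A : Finset V := insert y (bdy G X) with hA
  have hAD : ∀ v ∈ A, v ∈ D := by
    intro v hv
    rcases Finset.mem_insert.1 hv with rfl | hv
    · exact ⟨hyY, fun h => (hyX h).elim⟩
    · exact ⟨hXY' (hbX hv), fun _ => hv⟩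
  have hXD : ∀ v ∈ D, v ∈ insert y X → v ∈ A := by
    intro v hv hvX
    rcases Finset.mem_insert.1 hvX with rfl | hvX
    · exact Finset.mem_insert_self _ _
    · exact Finset.mem_insert_of_mem (hv.2 hvX)
  have hnosep : ∀ T : Finset V, T.card < i + 1 →
      ∃ a ∈ (A : Set V), ∃ b ∈ ((bdy G Y : Finset V) : Set V), Cw G (D \ T) a b := by
    by_contra hno
    have hex : ∃ c, ∃ T : Finset V, T.card = c ∧ c < i + 1 ∧
        ¬ ∃ a ∈ (A : Set V), ∃ b ∈ ((bdy G Y : Finset V) : Set V), Cw G (D \ T) a b := by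
      push Not at hno
      obtain ⟨T, hT, h⟩ := hno
      refine ⟨_, T, rfl, hT, ?_⟩
      push Not
      exact h
    obtain ⟨T, hTc, hTi, hT⟩ := Nat.find_spec hex
    have hmin := fun c => Nat.find_min hex (m := c)
    set c := Nat.find hex
    obtain ⟨P0, hP0, hP0d⟩ := menger D c G A (bdy G Y : Finset V) (by
      intro T' hT'
      by_contra hcon
      exact hmin _ hT' ⟨T', rfl, by omega, hcon⟩)
    push Not at hT
    obtain ⟨_, P, hP, hPd⟩ := menger_aux2 (G := G) (D := D) (k := c)
      (A := ((bdy G Y : Finset V) : Set V)) T hTc.le ⟨P0, fun j => by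
        obtain ⟨p1, p2, ⟨a, ha1, ha2⟩, ⟨b, hb1, hb2⟩⟩ := hP0 j
        refine ⟨p1, p2, ⟨b, hb1, hb2⟩, ?_⟩
        by_contra hne
        rw [Set.not_nonempty_iff_eq_empty] at hne
        refine hT a ha2 b hb2 ((p2.con ha1 hb1).mono fun z hz => ⟨p1 hz, fun hzT => ?_⟩)
        have : z ∈ P0 j ∩ T := ⟨hz, hzT⟩
        rw [hne] at this
        exact this, hP0d⟩
    have hTD : ∀ s ∈ T, s ∈ D := fun s hs => (hP s hs).1 (hP s hs).2.2.2.1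
    set Z : Finset V := Y.filter (fun v => v ∈ insert y X ∨ v ∈ T ∨ ∃ a ∈ A, Cw G (D \ T) a v) with hZ
    have hZY : Z ⊆ Y := Finset.filter_subset _ _
    have hbZ : bdy G Z ⊆ T := by
      intro v hv
      by_contra hvT
      obtain ⟨hvZ, u, hu, ha⟩ := mem_bdy.1 hv
      obtain ⟨hvY, hv'⟩ := Finset.mem_filter.1 hvZ
      have hr : ∃ a ∈ A, Cw G (D \ T) a v := by
        rcases hv' with h | h | h
        · by_cases hvA : v ∈ A
          · exact ⟨v, hvA, Cw.refl ⟨hAD v hvA, hvT⟩⟩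
          · exfalso
            have hvX : v ∈ X := (Finset.mem_insert.1 h).resolve_left
              (fun h => hvA (h ▸ Finset.mem_insert_self _ _))
            have hvb : v ∉ bdy G X := fun h => hvA (Finset.mem_insert_of_mem h)
            have huX : u ∈ X := by
              by_contra huX
              exact hvb (mem_bdy.2 ⟨hvX, u, huX, ha⟩)
            exact hu (Finset.mem_filter.2 ⟨hXY' huX, Or.inl (Finset.mem_insert_of_mem huX)⟩)
        · exact (hvT h).elim
        · exact h
      obtain ⟨a, haA, hav⟩ := hr
      have huY : u ∈ Y := by
        by_contra huY
        exact hT a haA v (mem_bdy.2 ⟨hvY, u, huY, ha⟩) hav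
      have hu' : ¬ (u ∈ insert y X ∨ u ∈ T ∨ ∃ a ∈ A, Cw G (D \ T) a u) :=
        fun h => hu (Finset.mem_filter.2 ⟨huY, h⟩)
      push Not at hu'
      refine hu'.2.2 a haA (hav.step ha ⟨⟨huY, fun h => ?_⟩, hu'.2.1⟩)
      exact (hu'.1 (Finset.mem_insert_of_mem h)).elim
    have hZG : Good G n Z := by
      refine good_transfer hY hZY P (fun s hs => ?_) (fun s hs t ht => hPd s (hbZ hs) t (hbZ ht))
      obtain ⟨p1, p2, ⟨b, p3, p3'⟩, p4, p5⟩ := hP s (hbZ hs)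
      refine ⟨fun v hv => (p1 hv).1, p2, p4, fun v hv hvZ => ?_, b, p3, p3'⟩
      by_contra hne
      obtain ⟨b', hb', hbv⟩ := p5 v hv hne
      obtain ⟨hvY, h | h | ⟨a, ha, h⟩⟩ := Finset.mem_filter.1 hvZ
      · exact hT v (hXD v (p1 hv) h) b' hb' hbv.symm
      · exact hbv.right.2 h
      · exact hT a ha b' hb' (h.trans hbv.symm)
    have hZX : Z = X := hXm Z (fun v hv => Finset.mem_filter.2
      ⟨hXY' hv, Or.inl (Finset.mem_insert_of_mem hv)⟩) hZG (by
        have := Finset.card_le_card hbZ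
        omega)
    apply hyX
    rw [← hZX]
    exact Finset.mem_filter.2 ⟨hyY, Or.inl (Finset.mem_insert_self _ _)⟩
  obtain ⟨P0, hP0, hP0d⟩ := menger D (i + 1) G A (bdy G Y : Finset V) hnosep
  obtain ⟨_, P, hP, hPd⟩ := menger_aux2 (G := G) (D := D) (k := i + 1)
    (A := ((bdy G Y : Finset V) : Set V)) A hAc.le ⟨P0, fun j => by
        obtain ⟨p1, p2, p3, p4⟩ := hP0 j
        exact ⟨p1, p2, p4, p3⟩, hP0d⟩
  have hPX : ∀ s ∈ A, ∀ v ∈ P s, v ∈ X → v = s := by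
    intro s hs v hv hvX
    by_contra hne
    have hvA : v ∈ A := hXD v ((hP s hs).1 hv) (Finset.mem_insert_of_mem hvX)
    exact Set.disjoint_left.1 (hPd s hs v hvA (Ne.symm hne)) hv (hP v hvA).2.2.2.1
  let z : ℕ → V := fun j => if j < i then x j else y
  let U' : ℕ → Set V := fun j => if j < i then U j ∪ P (x j) else P y
  have hzA : ∀ j < i + 1, z j ∈ A := by
    intro j hj
    simp only [z]
    split_ifs with h
    · exact Finset.mem_insert_of_mem (hU j h).1
    · exact Finset.mem_insert_self _ _
  have hxinj : ∀ j < i, ∀ l < i, j ≠ l → x j ≠ x l := by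
    intro j hj l hl hne he
    exact Set.disjoint_left.1 (hUd j hj l hl hne) (hU j hj).2.2.2 (he ▸ (hU l hl).2.2.2)
  have hzb : ∀ j < i + 1, ∃ b ∈ bdy G Y, b ∈ P (z j) := by
    intro j hj
    obtain ⟨b, h1, h2⟩ := (hP _ (hzA j hj)).2.2.1
    exact ⟨b, h2, h1⟩
  have hVn : Nonempty V := ⟨y⟩
  choose! b hb hbP using hzb
  have hPU : ∀ j < i + 1, P (z j) ⊆ U' j := by
    intro j hj
    simp only [z, U']
    split_ifs
    · exact Set.subset_union_right
    · exact le_rfl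
  have hyA : y ∈ A := Finset.mem_insert_self _ _
  have hdis : ∀ j < i, ∀ l < i + 1, j ≠ l → Disjoint (U' j) (U' l) := by
    intro j hj l hl hne
    have hxj : x j ∈ A := Finset.mem_insert_of_mem (hU j hj).1
    simp only [U', hj, if_true]
    split_ifs with hli
    · have hxl : x l ∈ A := Finset.mem_insert_of_mem (hU l hli).1
      rw [Set.disjoint_union_left, Set.disjoint_union_right, Set.disjoint_union_right]
      refine ⟨⟨hUd j hj l hli hne, ?_⟩, ?_, hPd _ hxj _ hxl (hxinj j hj l hli hne)⟩
      · rw [Set.disjoint_left]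
        intro v hv1 hv2
        have := hPX _ hxl v hv2 ((hU j hj).2.2.1 hv1)
        subst this
        exact Set.disjoint_left.1 (hUd j hj l hli hne) hv1 (hU l hli).2.2.2
      · rw [Set.disjoint_left]
        intro v hv2 hv1
        have := hPX _ hxj v hv2 ((hU l hli).2.2.1 hv1)
        subst this
        exact Set.disjoint_left.1 (hUd j hj l hli hne) (hU j hj).2.2.2 hv1
    · rw [Set.disjoint_union_left]
      constructor
      · rw [Set.disjoint_left]
        intro v hv1 hv2
        have := hPX _ hyA v hv2 ((hU j hj).2.2.1 hv1)
        exact hyX (this ▸ (hU j hj).2.2.1 hv1)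
      · refine hPd _ hxj _ hyA ?_
        intro h
        exact hyX (h ▸ hbX (hU j hj).1)
  have hdis' : ∀ j < i + 1, ∀ l < i + 1, j ≠ l → Disjoint (U' j) (U' l) := by
    intro j hj l hl hne
    by_cases h1 : j < i
    · exact hdis j h1 l hl hne
    · exact (hdis l (by omega) j hj hne.symm).symm
  have hYc' : (bdy G Y).card = i + 1 := by
    refine le_antisymm hYc ?_
    have h1 : ((Finset.range (i + 1)).image b).card = i + 1 := by
      rw [Finset.card_image_of_injOn, Finset.card_range]
      intro j hj l hl he
      simp only [Finset.coe_range, Set.mem_Iio] at hj hl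
      by_contra hne
      exact Set.disjoint_left.1 (hdis' j hj l hl hne) (hPU j hj (hbP j hj))
        (hPU l hl (he ▸ hbP l hl))
    rw [← h1]
    apply Finset.card_le_card
    intro v hv
    obtain ⟨j, hj, rfl⟩ := Finset.mem_image.1 hv
    exact hb j (Finset.mem_range.1 hj)
  refine ⟨Y, hY, hYc', hYm, b, U', fun j hj => ⟨hb j hj, ?_, ?_, hPU j hj (hbP j hj)⟩, hdis', ?_⟩
  · simp only [U']
    split_ifs with hji
    · have hxj : x j ∈ A := Finset.mem_insert_of_mem (hU j hji).1
      exact (hU j hji).2.1.union_inter (hP _ hxj).2.1 ⟨x j, (hU j hji).2.2.2, (hP _ hxj).2.2.2.1⟩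
    · exact (hP _ hyA).2.1
  · have hPY : P (z j) ⊆ Y := fun v hv => ((hP _ (hzA j hj)).1 hv).1
    simp only [U']
    simp only [z] at hPY
    split_ifs with hji
    · simp only [hji, if_true] at hPY
      exact Set.union_subset ((hU j hji).2.2.1.trans hXY') hPY
    · simp only [hji, if_false] at hPY
      exact hPY
  · intro j hj1 hj
    have hpi : (j - 1) / 2 < i := by omega
    by_cases hji : j < i
    · refine (hUa j hj1 hji).mono ?_ ?_
      · simp only [U', hji, if_true]; exact Set.subset_union_left
      · simp only [U', hpi, if_true]; exact Set.subset_union_left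
    · have hji' : j = i := by omega
      subst hji'
      refine ⟨y, ?_, x ((j - 1) / 2), ?_, (hya hj1).symm⟩
      · simp only [U', lt_irrefl, if_false]; exact (hP _ hyA).2.2.2.1
      · simp only [U', hpi, if_true]; exact Or.inl (hU _ hpi).2.2.2

theorem pw_tree [Fintype V] [hV : Nonempty V] {n : ℕ} (hpw : n ≤ pathwidth G) :
    ∃ U : ℕ → Set V, (∀ j < n, Cn G (U j)) ∧
      (∀ j < n, ∀ l < n, j ≠ l → Disjoint (U j) (U l)) ∧
      (∀ j, 1 ≤ j → j < n → Ad G (U j) (U ((j - 1) / 2))) := by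
  have h : ∀ i ≤ n, TInv G n i := by
    intro i
    induction i with
    | zero =>
      intro _
      obtain ⟨X, _, h1, h2, h3⟩ := exists_max_good (G := G) (good_empty n) (i := 0) (by
        rw [Nat.le_zero, Finset.card_eq_zero]
        ext v; simp [mem_bdy])
      exact ⟨X, h1, Nat.le_zero.1 h2, h3, fun _ => hV.some, fun _ => ∅, by simp, by simp, by omega⟩
    | succ i ih => exact fun hi => inv_step (by omega) hpw (ih (by omega))
  obtain ⟨X, _, _, _, x, U, h1, h2, h3⟩ := h n le_rfl
  exact ⟨U, fun j hj => (h1 j hj).2.1, h2, h3⟩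
end PW



lemma dj {A B : Set V} (h : Disjoint A B) (v : V) : v ∈ A → v ∉ B := fun h1 => Set.disjoint_left.1 h h1

/-- rooted binary tree of connected sets, of height n, with leaves meeting L;
T is the union, R the root set -/
def LTr (G : SimpleGraph V) (L : Set V) : ℕ → Set V → Set V → Prop
  | 0, T, R => T = R ∧ Cn G R ∧ (R ∩ L).Nonempty
  | n + 1, T, R => Cn G R ∧ ∃ T1 R1 T2 R2, LTr G L n T1 R1 ∧ LTr G L n T2 R2 ∧ T = R ∪ T1 ∪ T2 ∧
      Disjoint R T1 ∧ Disjoint R T2 ∧ Disjoint T1 T2 ∧ Ad G R R1 ∧ Ad G R R2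

lemma LTr.cnR {L : Set V} {n : ℕ} {T R : Set V} (h : LTr G L n T R) : Cn G R := by
  cases n with
  | zero => exact h.2.1
  | succ n => exact h.1

lemma LTr.sub {L : Set V} {n : ℕ} {T R : Set V} (h : LTr G L n T R) : R ⊆ T := by
  cases n with
  | zero => exact h.1.ge
  | succ n =>
    obtain ⟨_, T1, R1, T2, R2, _, _, rfl, _⟩ := h
    exact fun v hv => Or.inl (Or.inl hv)

lemma LTr.cnT {L : Set V} {n : ℕ} : ∀ {T R : Set V}, LTr G L n T R → Cn G T := by
  induction n with
  | zero => rintro T R ⟨rfl, h, _⟩; exact h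
  | succ n ih =>
    rintro T R ⟨hR, T1, R1, T2, R2, h1, h2, rfl, _, _, _, a1, a2⟩
    refine (hR.union_ad (ih h1) (a1.mono le_rfl h1.sub)).union_ad (ih h2) (a2.mono ?_ h2.sub)
    exact Set.subset_union_left

lemma LTr.mono {L L' : Set V} {n : ℕ} : ∀ {T R : Set V}, LTr G L n T R → L ∩ T ⊆ L' →
    LTr G L' n T R := by
  induction n with
  | zero =>
    rintro T R ⟨rfl, h, x, hx1, hx2⟩ hL
    exact ⟨rfl, h, x, hx1, hL ⟨hx2, hx1⟩⟩
  | succ n ih =>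
    rintro T R ⟨hR, T1, R1, T2, R2, h1, h2, rfl, d⟩ hL
    exact ⟨hR, T1, R1, T2, R2, ih h1 (fun v hv => hL ⟨hv.1, Or.inl (Or.inr hv.2)⟩),
      ih h2 (fun v hv => hL ⟨hv.1, Or.inr hv.2⟩), rfl, d⟩

lemma LTr.rootext {L : Set V} {n : ℕ} {T R R' : Set V} (h : LTr G L n T R) (hc : Cn G R')
    (hR : R ⊆ R') (hT : R' ∩ T ⊆ R) : LTr G L n (T ∪ R') R' := by
  cases n with
  | zero =>
    obtain ⟨rfl, _, h⟩ := h
    exact ⟨Set.union_eq_right.2 hR, hc, h.mono (Set.inter_subset_inter_left _ hR)⟩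
  | succ n =>
    obtain ⟨_, T1, R1, T2, R2, h1, h2, rfl, d1, d2, d3, a1, a2⟩ := h
    refine ⟨hc, T1, R1, T2, R2, h1, h2, ?_, ?_, ?_, d3, a1.mono hR le_rfl, a2.mono hR le_rfl⟩
    · ext v
      have := @hR v
      simp only [Set.mem_union]
      tauto
    · rw [Set.disjoint_left]
      intro v hv hv1
      exact Set.disjoint_left.1 d1 (hT ⟨hv, Or.inl (Or.inr hv1)⟩) hv1
    · rw [Set.disjoint_left]
      intro v hv hv1
      exact Set.disjoint_left.1 d2 (hT ⟨hv, Or.inr hv1⟩) hv1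

lemma LTr.ins {L : Set V} {n : ℕ} {u : V} : ∀ {T R : Set V}, LTr G L n T R → u ∉ T → Ad G T {u} →
    ∃ R', R ⊆ R' ∧ LTr G L n (T ∪ {u}) R' := by
  induction n with
  | zero =>
    rintro T R ⟨rfl, h1, h2⟩ hu ha
    exact ⟨T ∪ {u}, Set.subset_union_left, rfl, h1.union_ad (cn_singleton u) ha,
      h2.mono (Set.inter_subset_inter_left _ Set.subset_union_left)⟩
  | succ n ih =>
    intro T R h hu ha
    by_cases hRu : Ad G R {u}
    · refine ⟨R ∪ {u}, Set.subset_union_left, ?_⟩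
      have := h.rootext (h.cnR.union_ad (cn_singleton u) hRu) Set.subset_union_left (by
        rintro v ⟨hv | rfl, hv2⟩
        · exact hv
        · exact (hu hv2).elim)
      convert this using 1
      rw [← Set.union_assoc, Set.union_eq_self_of_subset_right h.sub]
    · obtain ⟨hR, T1, R1, T2, R2, h1, h2, rfl, d1, d2, d3, a1, a2⟩ := h
      simp only [Set.mem_union, not_or] at hu
      obtain ⟨t, ht, u', rfl, htu⟩ := ha
      rcases ht with (ht | ht) | ht
      · exact (hRu ⟨t, ht, u', rfl, htu⟩).elim
      · obtain ⟨R1', hR1, h1'⟩ := ih h1 hu.1.2 ⟨t, ht, u', rfl, htu⟩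
        refine ⟨R, le_rfl, hR, _, R1', T2, R2, h1', h2, ?_, ?_, d2, ?_, a1.mono le_rfl hR1, a2⟩
        · ext v; simp only [Set.mem_union]; tauto
        · simp [d1, hu.1.1]
        · simp [d3, hu.2]
      · obtain ⟨R2', hR2, h2'⟩ := ih h2 hu.2 ⟨t, ht, u', rfl, htu⟩
        refine ⟨R, le_rfl, hR, T1, R1, _, R2', h1, h2', ?_, d1, ?_, ?_, a1, a2.mono le_rfl hR2⟩
        · ext v; simp only [Set.mem_union]; tauto
        · simp [d2, hu.1.1]
        · simp [d3, hu.1.2]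

lemma LTr.ext [Finite V] {L : Set V} {n : ℕ} {T R B : Set V} (h : LTr G L n T R) (hB : Cn G B)
    (hTB : T ⊆ B) : ∃ R', R ⊆ R' ∧ LTr G L n B R' := by
  obtain ⟨D, _, hD⟩ := Finite.exists_le_maximal
    (p := fun D : Set V => D ⊆ B ∧ ∃ R', R ⊆ R' ∧ LTr G L n D R') (a := T) ⟨hTB, R, le_rfl, h⟩
  obtain ⟨hDB, R', hR, hD'⟩ := hD.prop
  by_cases he : D = B
  · subst he; exact ⟨R', hR, hD'⟩
  exfalso
  obtain ⟨b, hb, hbD⟩ : ∃ b ∈ B, b ∉ D := by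
    by_contra hno; push Not at hno; exact he (hDB.antisymm hno)
  obtain ⟨d, hd⟩ := hD'.cnT.nonempty
  obtain ⟨x, y, hx, hy, hxy, _, hyB⟩ := (hB.con (hDB hd) hb).exit hd hbD
  obtain ⟨R2, hR2, h2⟩ := hD'.ins hy ⟨x, hx, y, rfl, hxy⟩
  have := hD.eq_of_le (y := D ∪ {y}) ⟨Set.union_subset hDB (by simpa using hyB), R2, hR.trans hR2, h2⟩
    Set.subset_union_left
  exact hy (this ▸ Or.inr rfl)

/-- connection between nested trees -/
def coC (G : SimpleGraph V) (X R Y R' : Set V) : Prop :=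
  (X = Y ∧ R = R') ∨ (Cn G (X \ Y) ∧ R ⊆ X \ Y ∧ Ad G (X \ Y) R')

lemma coC.trans {X R Y R' Z R'' : Set V} (h1 : coC G X R Y R') (h2 : coC G Y R' Z R'')
    (hY : Y ⊆ X) (hZ : Z ⊆ Y) : coC G X R Z R'' := by
  rcases h1 with ⟨rfl, rfl⟩ | ⟨a1, a2, a3⟩
  · exact h2
  rcases h2 with ⟨rfl, rfl⟩ | ⟨b1, b2, b3⟩
  · exact Or.inr ⟨a1, a2, a3⟩
  have he : X \ Z = (X \ Y) ∪ (Y \ Z) := by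
    ext v
    have := @hY v; have := @hZ v
    simp only [Set.mem_union, Set.mem_sdiff]
    tauto
  refine Or.inr ?_
  rw [he]
  exact ⟨a1.union_ad b1 (a3.mono le_rfl b2), a2.trans Set.subset_union_left,
    b3.mono Set.subset_union_right le_rfl⟩

lemma LTr.avoid {L : Set V} {n k : ℕ} : ∀ {X R : Set V}, LTr G Set.univ (n + k) X R →
    (∃ R', R ⊆ R' ∧ LTr G L k X R') ∨
    ∃ Y R', Y ⊆ X ∧ LTr G Set.univ n Y R' ∧ Disjoint Y L ∧ coC G X R Y R' := by
  induction k with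
  | zero =>
    intro X R h
    by_cases hL : (X ∩ L).Nonempty
    · exact Or.inl ⟨X, h.sub, rfl, h.cnT, hL⟩
    · refine Or.inr ⟨X, R, le_rfl, h, ?_, Or.inl ⟨rfl, rfl⟩⟩
      rwa [Set.disjoint_iff_inter_eq_empty, ← Set.not_nonempty_iff_eq_empty]
  | succ k ih =>
    intro X R h
    obtain ⟨hR, T1, R1, T2, R2, h1, h2, rfl, d1, d2, d3, a1, a2⟩ := h
    have c1 : coC G (R ∪ T1 ∪ T2) R T1 R1 := by
      have he : (R ∪ T1 ∪ T2) \ T1 = R ∪ T2 := by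
        ext v
        have := dj d1 v; have := dj d3 v
        simp only [Set.mem_union, Set.mem_sdiff]
        tauto
      refine Or.inr ?_
      rw [he]
      exact ⟨hR.union_ad h2.cnT (a2.mono le_rfl h2.sub), Set.subset_union_left,
        a1.mono Set.subset_union_left le_rfl⟩
    have c2 : coC G (R ∪ T1 ∪ T2) R T2 R2 := by
      have he : (R ∪ T1 ∪ T2) \ T2 = R ∪ T1 := by
        ext v
        have := dj d2 v; have := dj d3 v
        simp only [Set.mem_union, Set.mem_sdiff]
        tauto
      refine Or.inr ?_
      rw [he]
      exact ⟨hR.union_ad h1.cnT (a1.mono le_rfl h1.sub), Set.subset_union_left,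
        a2.mono Set.subset_union_left le_rfl⟩
    have s1 : T1 ⊆ R ∪ T1 ∪ T2 := fun v hv => Or.inl (Or.inr hv)
    have s2 : T2 ⊆ R ∪ T1 ∪ T2 := fun v hv => Or.inr hv
    rcases ih h1 with ⟨R1', e1, h1'⟩ | ⟨Y, R', hY, hY1, hY2, hY3⟩
    · rcases ih h2 with ⟨R2', e2, h2'⟩ | ⟨Y, R', hY, hY1, hY2, hY3⟩
      · exact Or.inl ⟨R, le_rfl, hR, T1, R1', T2, R2', h1', h2', rfl, d1, d2, d3,
          a1.mono le_rfl e1, a2.mono le_rfl e2⟩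
      · exact Or.inr ⟨Y, R', hY.trans s2, hY1, hY2, c2.trans hY3 s2 hY⟩
    · exact Or.inr ⟨Y, R', hY.trans s1, hY1, hY2, c1.trans hY3 s1 hY⟩

/-- neighbours of a set -/
def nb (G : SimpleGraph V) (A : Set V) : Set V := {v | ∃ u ∈ A, G.Adj u v}

lemma LTr.model {L : Set V} {k : ℕ} : ∀ {T R : Set V}, LTr G L k T R →
    ∃ g : List Bool → Set V, g [] = R ∧ (∀ σ, σ.length ≤ k → Cn G (g σ) ∧ g σ ⊆ T) ∧
      (∀ σ τ, σ.length ≤ k → τ.length ≤ k → σ ≠ τ → Disjoint (g σ) (g τ)) ∧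
      (∀ σ b, σ.length < k → Ad G (g σ) (g (σ ++ [b]))) ∧
      (∀ σ, σ.length = k → (g σ ∩ L).Nonempty) := by
  induction k with
  | zero =>
    rintro T R ⟨rfl, h1, h2⟩
    exact ⟨fun _ => T, rfl, fun _ _ => ⟨h1, le_rfl⟩, by
      intro σ τ h1 h2 hne
      simp only [Nat.le_zero, List.length_eq_zero_iff] at h1 h2
      exact (hne (h1.trans h2.symm)).elim, by simp, fun _ _ => h2⟩
  | succ k ih =>
    rintro T R ⟨hR, T1, R1, T2, R2, h1, h2, rfl, d1, d2, d3, a1, a2⟩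
    obtain ⟨g1, p1, p2, p3, p4, p5⟩ := ih h1
    obtain ⟨g2, q1, q2, q3, q4, q5⟩ := ih h2
    refine ⟨fun l => match l with
      | [] => R
      | false :: σ => g1 σ
      | true :: σ => g2 σ, rfl, ?_, ?_, ?_, ?_⟩
    · rintro (_ | ⟨_ | _, σ⟩) hσ
      · exact ⟨hR, fun v hv => Or.inl (Or.inl hv)⟩
      · have := p2 σ (by simpa using hσ)
        exact ⟨this.1, fun v hv => Or.inl (Or.inr (this.2 hv))⟩
      · have := q2 σ (by simpa using hσ)
        exact ⟨this.1, fun v hv => Or.inr (this.2 hv)⟩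
    · rintro (_ | ⟨_ | _, σ⟩) (_ | ⟨_ | _, τ⟩) hσ hτ hne <;>
        simp only [List.length_cons, Nat.add_le_add_iff_right, ne_eq, List.cons.injEq, true_and] at hσ hτ hne ⊢
      · exact (hne trivial).elim
      · exact d1.mono le_rfl (p2 τ hτ).2
      · exact d2.mono le_rfl (q2 τ hτ).2
      · exact (d1.mono le_rfl (p2 σ hσ).2).symm
      · exact p3 σ τ hσ hτ hne
      · exact d3.mono (p2 σ hσ).2 (q2 τ hτ).2
      · exact (d2.mono le_rfl (q2 σ hσ).2).symm
      · exact (d3.mono (p2 τ hτ).2 (q2 σ hσ).2).symm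
      · exact q3 σ τ hσ hτ hne
    · rintro (_ | ⟨_ | _, σ⟩) b hσ
      · cases b
        · simpa [p1] using a1
        · simpa [q1] using a2
      · exact p4 σ b (by simpa using hσ)
      · exact q4 σ b (by simpa using hσ)
    · rintro (_ | ⟨_ | _, σ⟩) hσ
      · simp at hσ
      · exact p5 σ (by simpa using hσ)
      · exact q5 σ (by simpa using hσ)

lemma ad_of_fromEdgeSet {W : Type} {E : Set (Sym2 W)} {f : W → Set V} {x y : W}
    (h : ∀ e ∈ E, ∃ a b, e = s(a, b) ∧ Ad G (f a) (f b)) (hxy : (fromEdgeSet E).Adj x y) :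
    Ad G (f x) (f y) := by
  rw [fromEdgeSet_adj] at hxy
  obtain ⟨a, b, he, hab⟩ := h _ hxy.1
  rw [Sym2.eq_iff] at he
  rcases he with ⟨rfl, rfl⟩ | ⟨rfl, rfl⟩
  · exact hab
  · exact hab.symm

lemma LTr.pminor {k : ℕ} {A T R : Set V} (h : LTr G (nb G A) k T R) (hA : Cn G A)
    (hd : Disjoint A T) : IsMinor (Pgraph k) G := by
  obtain ⟨g, _, p2, p3, p4, p5⟩ := h.model
  have hleaf : ∀ l : List Bool, l.length = k → Ad G A (g l.reverse) := by
    intro l hl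
    obtain ⟨v, hv, u, hu, ha⟩ := p5 l.reverse (by simpa using hl)
    exact ⟨u, hu, v, hv, ha⟩
  let f : Option (CTVert k) → Set V := fun w => match w with
    | none => A
    | some l => g l.1.reverse
  have hf : ∀ w, Cn G (f w) := by
    rintro (_ | ⟨l, hl⟩)
    · exact hA
    · exact (p2 _ (by simpa using hl)).1
  refine ⟨f, fun w => (hf w).nonempty, hf, ?_, ?_⟩
  · rintro (_ | ⟨l, hl⟩) (_ | ⟨m, hm⟩) hne
    · exact (hne rfl).elim
    · exact hd.mono le_rfl (p2 _ (by simpa using hm)).2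
    · exact (hd.mono le_rfl (p2 _ (by simpa using hl)).2).symm
    · refine p3 _ _ (by simpa using hl) (by simpa using hm) fun h => hne ?_
      have h2 : l = m := List.reverse_injective h
      subst h2; rfl
  · intro w1 w2 hadj
    refine ad_of_fromEdgeSet (f := f) ?_ hadj
    rintro e (⟨b, σ, hσ, rfl⟩ | ⟨l, hl, rfl⟩)
    · refine ⟨_, _, rfl, ?_⟩
      have := p4 σ.reverse b (by simpa using hσ)
      simpa [f] using this
    · exact ⟨_, _, rfl, hleaf l.1 hl⟩

lemma pw_LTr [Fintype V] [Nonempty V] {N : ℕ} (hpw : 2 ^ (N + 1) - 1 ≤ pathwidth G) :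
    ∃ T R, LTr G Set.univ N T R := by
  obtain ⟨U, h1, h2, h3⟩ := pw_tree hpw
  set n := 2 ^ (N + 1) - 1
  have key : ∀ d j, (j + 2) * 2 ^ d ≤ n + 1 → ∃ T, LTr G Set.univ d T (U j) ∧
      ∀ v ∈ T, ∃ i < n, v ∈ U i ∧ ∃ e, (i + 1) / 2 ^ e = j + 1 := by
    intro d
    induction d with
    | zero =>
      intro j hj
      have hjn : j < n := by simp at hj; omega
      refine ⟨U j, ⟨rfl, h1 j hjn, ?_⟩, fun v hv => ⟨j, hjn, hv, 0, by simp⟩⟩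
      simpa using (h1 j hjn).nonempty
    | succ d ih =>
      intro j hj
      have hp : 1 ≤ 2 ^ d := Nat.one_le_two_pow
      rw [pow_succ] at hj
      obtain ⟨T1, t1, s1⟩ := ih (2 * j + 1) (by nlinarith)
      obtain ⟨T2, t2, s2⟩ := ih (2 * j + 2) (by nlinarith)
      have hn2 : 2 * j + 4 ≤ n + 1 := by nlinarith
      have hne : ∀ i e, (i + 1) / 2 ^ e = 2 * j + 2 ∨ (i + 1) / 2 ^ e = 2 * j + 3 → i ≠ j := by
        intro i e h hi
        have := Nat.div_le_self (i + 1) (2 ^ e)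
        omega
      have hdR : ∀ T : Set V, (∀ v ∈ T, ∃ i < n, v ∈ U i ∧ i ≠ j) → Disjoint (U j) T := by
        intro T hT
        rw [Set.disjoint_left]
        intro v hv hvT
        obtain ⟨i, hi, hvi, hne⟩ := hT v hvT
        exact Set.disjoint_left.1 (h2 i hi j (by omega) hne) hvi hv
      refine ⟨_, ⟨h1 j (by omega), T1, _, T2, _, t1, t2, rfl, ?_, ?_, ?_, ?_, ?_⟩, ?_⟩
      · refine hdR T1 fun v hv => ?_
        obtain ⟨i, hi, hv, e, he⟩ := s1 v hv
        exact ⟨i, hi, hv, hne i e (Or.inl (by omega))⟩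
      · refine hdR T2 fun v hv => ?_
        obtain ⟨i, hi, hv, e, he⟩ := s2 v hv
        exact ⟨i, hi, hv, hne i e (Or.inr (by omega))⟩
      · rw [Set.disjoint_left]
        intro v hv1 hv2
        obtain ⟨i, hi, hvi, e, he⟩ := s1 v hv1
        obtain ⟨i', hi', hvi', e', he'⟩ := s2 v hv2
        have : i = i' := by
          by_contra hne
          exact Set.disjoint_left.1 (h2 i hi i' hi' hne) hvi hvi'
        subst this
        rcases lt_trichotomy e e' with hlt | rfl | hlt
        · obtain ⟨c, rfl⟩ := Nat.exists_eq_add_of_lt hlt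
          rw [show e + c + 1 = e + (c + 1) by ring, pow_add, ← Nat.div_div_eq_div_mul, he] at he'
          have := Nat.div_le_self (2 * j + 1 + 1) (2 ^ (c + 1))
          omega
        · omega
        · obtain ⟨c, rfl⟩ := Nat.exists_eq_add_of_lt hlt
          rw [show e' + c + 1 = e' + (c + 1) by ring, pow_add, ← Nat.div_div_eq_div_mul, he', pow_succ',
            ← Nat.div_div_eq_div_mul] at he
          have := Nat.div_le_self ((2 * j + 2 + 1) / 2) (2 ^ c)
          omega
      · have := h3 (2 * j + 1) (by omega) (by omega)
        rw [show (2 * j + 1 - 1) / 2 = j by omega] at this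
        exact this.symm
      · have := h3 (2 * j + 2) (by omega) (by omega)
        rw [show (2 * j + 2 - 1) / 2 = j by omega] at this
        exact this.symm
      · rintro v ((hv | hv) | hv)
        · exact ⟨j, by omega, hv, 0, by simp⟩
        · obtain ⟨i, hi, hv, e, he⟩ := s1 v hv
          exact ⟨i, hi, hv, e + 1, by rw [pow_succ, ← Nat.div_div_eq_div_mul, he]; omega⟩
        · obtain ⟨i, hi, hv, e, he⟩ := s2 v hv
          exact ⟨i, hi, hv, e + 1, by rw [pow_succ, ← Nat.div_div_eq_div_mul, he]; omega⟩
  obtain ⟨T, hT, _⟩ := key N 0 (by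
    have : 1 ≤ 2 ^ (N + 1) := Nat.one_le_two_pow
    have h2 : 2 ^ (N + 1) = 2 * 2 ^ N := pow_succ' 2 N
    omega)
  exact ⟨T, _, hT⟩



def Lk (G : SimpleGraph V) (D A B : Set V) : Prop :=
  Ad G A B ∨ ∃ K ⊆ D, Cn G K ∧ Ad G A K ∧ Ad G K B

lemma Lk.symm {D A B : Set V} (h : Lk G D A B) : Lk G D B A := by
  rcases h with h | ⟨K, h1, h2, h3, h4⟩
  · exact Or.inl h.symm
  · exact Or.inr ⟨K, h1, h2, h4.symm, h3.symm⟩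

lemma Lk.mono {D A B D' A' B' : Set V} (h : Lk G D A B) (hD : D ⊆ D') (hA : A ⊆ A') (hB : B ⊆ B') :
    Lk G D' A' B' := by
  rcases h with h | ⟨K, h1, h2, h3, h4⟩
  · exact Or.inl (h.mono hA hB)
  · exact Or.inr ⟨K, h1.trans hD, h2, h3.mono hA le_rfl, h4.mono le_rfl hB⟩

lemma Lk.absorb {D A C : Set V} (h : Lk G D A C) (hC : Cn G C) :
    ∃ C', C ⊆ C' ∧ C' ⊆ C ∪ D ∧ Cn G C' ∧ Ad G A C' := by
  rcases h with h | ⟨K, h1, h2, h3, h4⟩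
  · exact ⟨C, le_rfl, Set.subset_union_left, hC, h⟩
  · exact ⟨C ∪ K, Set.subset_union_left, Set.union_subset_union_right _ h1,
      hC.union_ad h2 h4.symm, h3.mono le_rfl Set.subset_union_right⟩

def QW (G : SimpleGraph V) : ℕ → Set V → Set V → Set V → Prop
  | 0, D, A, B => Lk G D A B
  | j + 1, D, A, B => ∃ D1 C D2, D1 ⊆ D ∧ C ⊆ D ∧ D2 ⊆ D ∧ Disjoint D1 C ∧ Disjoint D1 D2 ∧
      Disjoint C D2 ∧ Cn G C ∧ (Ad G A C ∨ Ad G C B) ∧ QW G j D1 A C ∧ QW G j D2 C B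

def QQ (G : SimpleGraph V) : ℕ → Set V → Set V → Set V → Prop
  | 0, _, _, _ => True
  | j + 1, D, A, B => ∃ D1 C D2, D1 ⊆ D ∧ C ⊆ D ∧ D2 ⊆ D ∧ Disjoint D1 C ∧ Disjoint D1 D2 ∧
      Disjoint C D2 ∧ Cn G C ∧ Ad G A C ∧ Ad G B C ∧ QQ G j D1 A C ∧ QQ G j D2 B C

lemma QW.mono {j : ℕ} : ∀ {D A B D' A' B' : Set V}, QW G j D A B → D ⊆ D' → A ⊆ A' → B ⊆ B' →
    QW G j D' A' B' := by
  induction j with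
  | zero => intro D A B D' A' B' h; exact Lk.mono h
  | succ j ih =>
    rintro D A B D' A' B' ⟨D1, C, D2, s1, s2, s3, d1, d2, d3, c, a, q1, q2⟩ hD hA hB
    exact ⟨D1, C, D2, s1.trans hD, s2.trans hD, s3.trans hD, d1, d2, d3, c,
      a.imp (fun h => h.mono hA le_rfl) (fun h => h.mono le_rfl hB),
      ih q1 le_rfl hA le_rfl, ih q2 le_rfl le_rfl hB⟩

lemma QQ.mono {j : ℕ} : ∀ {D A B D' A' B' : Set V}, QQ G j D A B → D ⊆ D' → A ⊆ A' → B ⊆ B' →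
    QQ G j D' A' B' := by
  induction j with
  | zero => intros; trivial
  | succ j ih =>
    rintro D A B D' A' B' ⟨D1, C, D2, s1, s2, s3, d1, d2, d3, c, a, a', q1, q2⟩ hD hA hB
    exact ⟨D1, C, D2, s1.trans hD, s2.trans hD, s3.trans hD, d1, d2, d3, c,
      a.mono hA le_rfl, a'.mono hB le_rfl,
      ih q1 le_rfl hA le_rfl, ih q2 le_rfl hB le_rfl⟩

lemma QQ.symm {j : ℕ} {D A B : Set V} (h : QQ G j D A B) : QQ G j D B A := by
  cases j with
  | zero => trivial
  | succ j =>
    obtain ⟨D1, C, D2, s1, s2, s3, d1, d2, d3, c, a, a', q1, q2⟩ := h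
    exact ⟨D2, C, D1, s3, s2, s1, d3.symm, d2.symm, d1.symm, c, a', a, q2, q1⟩

lemma QW.lk {j : ℕ} : ∀ {D A B : Set V}, QW G j D A B → Lk G D A B := by
  induction j with
  | zero => intro D A B h; exact h
  | succ j ih =>
    rintro D A B ⟨D1, C, D2, s1, s2, s3, d1, d2, d3, c, a, q1, q2⟩
    obtain ⟨C1, h1, h2, h3, h4⟩ := (ih q1).absorb c
    obtain ⟨C2, e1, e2, e3, e4⟩ := (ih q2).symm.absorb c
    obtain ⟨x, hx⟩ := c.nonempty
    refine Or.inr ⟨C1 ∪ C2, ?_, h3.union_inter e3 ⟨x, h1 hx, e1 hx⟩,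
      h4.mono le_rfl Set.subset_union_left, e4.symm.mono Set.subset_union_right le_rfl⟩
    exact Set.union_subset (h2.trans (Set.union_subset s2 s1)) (e2.trans (Set.union_subset s2 s3))

lemma QW.alpha {n : ℕ} {D A B : Set V} (h : QW G (n + 1) D A B) (hA : Cn G A) (hB : Cn G B)
    (dAB : Disjoint A B) (dAD : Disjoint A D) (dBD : Disjoint B D) :
    ∃ A' B' D', A ⊆ A' ∧ A' ⊆ A ∪ D ∧ B ⊆ B' ∧ B' ⊆ B ∪ D ∧ D' ⊆ D ∧ Disjoint A' B' ∧
      Disjoint A' D' ∧ Disjoint B' D' ∧ Cn G A' ∧ Cn G B' ∧ Ad G A' B' ∧ QW G n D' A' B' := by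
  obtain ⟨D1, C, D2, s1, s2, s3, d1, d2, d3, c, a, q1, q2⟩ := h
  obtain ⟨x, hx⟩ := c.nonempty
  rcases a with a | a
  · obtain ⟨C', h1, h2, h3, h4⟩ := q2.lk.symm.absorb c
    refine ⟨A, B ∪ C', D1, le_rfl, Set.subset_union_left, Set.subset_union_left,
      Set.union_subset_union_right _ (h2.trans (Set.union_subset s2 s3)), s1, ?_, ?_, ?_,
      hA, hB.union_ad h3 h4, a.mono le_rfl (h1.trans Set.subset_union_right),
      q1.mono le_rfl le_rfl (h1.trans Set.subset_union_right)⟩ <;>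
    · simp only [Set.disjoint_left, Set.subset_def, Set.mem_union] at *
      grind
  · obtain ⟨C', h1, h2, h3, h4⟩ := q1.lk.absorb c
    refine ⟨A ∪ C', B, D2, Set.subset_union_left, 
      Set.union_subset_union_right _ (h2.trans (Set.union_subset s2 s1)), le_rfl,
      Set.subset_union_left, s3, ?_, ?_, ?_,
      hA.union_ad h3 h4, hB, a.mono (h1.trans Set.subset_union_right) le_rfl,
      q2.mono le_rfl (h1.trans Set.subset_union_right) le_rfl⟩ <;>
    · simp only [Set.disjoint_left, Set.subset_def, Set.mem_union] at *
      grind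

lemma QW.toQQ {j : ℕ} : ∀ {D A B : Set V}, QW G (2 * j + 1) D A B → Cn G A → Cn G B →
    Disjoint A B → Disjoint A D → Disjoint B D →
    ∃ A' B' D', A ⊆ A' ∧ A' ⊆ A ∪ D ∧ B ⊆ B' ∧ B' ⊆ B ∪ D ∧ D' ⊆ D ∧ Disjoint A' B' ∧
      Disjoint A' D' ∧ Disjoint B' D' ∧ Cn G A' ∧ Cn G B' ∧ Ad G A' B' ∧ QQ G j D' A' B' := by
  induction j with
  | zero =>
    intro D A B h hA hB d1 d2 d3
    obtain ⟨A', B', D', h1, h2, h3, h4, h5, h6, h7, h8, h9, h10, h11, _⟩ := h.alpha hA hB d1 d2 d3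
    exact ⟨A', B', D', h1, h2, h3, h4, h5, h6, h7, h8, h9, h10, h11, trivial⟩
  | succ j ih =>
    intro D A B h hA hB dAB dAD dBD
    obtain ⟨A', B', D', h1, h2, h3, h4, h5, h6, h7, h8, h9, h10, h11, h12⟩ := h.alpha hA hB dAB dAD dBD
    obtain ⟨D1, C, D2, s1, s2, s3, d1, d2, d3, c, a, q1, q2⟩ := h12
    obtain ⟨A2, C1, E1, e1, e2, e3, e4, e5, e6, e7, e8, e9, e10, e11, e12⟩ := ih q1 h9 c
      (h7.mono le_rfl s2) (h7.mono le_rfl s1) d1.symm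
    obtain ⟨C2, B2, E2, f1, f2, f3, f4, f5, f6, f7, f8, f9, f10, f11, f12⟩ := ih q2 c h10
      (h8.mono le_rfl s2).symm d3 (h8.mono le_rfl s3)
    obtain ⟨x, hx⟩ := c.nonempty
    have t1 : A ⊆ A2 := h1.trans e1
    have t2 : B ⊆ B2 := h3.trans f3
    have m1 : C1 ∪ C2 ⊆ D' := Set.union_subset (e4.trans (Set.union_subset s2 s1))
      (f2.trans (Set.union_subset s2 s3))
    refine ⟨A2, B2, C1 ∪ C2 ∪ E1 ∪ E2, t1, ?_, t2, ?_, ?_, ?_, ?_, ?_, e9, f10, ?_, 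
      E1, C1 ∪ C2, E2, ?_, ?_, ?_, ?_, ?_, ?_, e10.union_inter f9 ⟨x, e3 hx, f1 hx⟩,
      e11.mono le_rfl Set.subset_union_left, f11.symm.mono le_rfl Set.subset_union_right,
      e12.mono le_rfl le_rfl Set.subset_union_left,
      f12.symm.mono le_rfl le_rfl Set.subset_union_right⟩
    case refine_7 => exact h11.mono e1 f3
    all_goals
      clear ih h c a q1 q2 e9 e10 e11 e12 f9 f10 f11 f12 h11 h9 h10 hA hB t1 t2
      simp only [Set.disjoint_left, Set.subset_def, Set.mem_union] at *
      grind

/-- base pairs -/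
def pb : Set V → Set V → (List Bool → Set V) → List Bool → Set V × Set V
  | A, B, _, [] => (A, B)
  | A, B, g, b :: σ => pb (if b then B else A) (g []) (fun τ => g (b :: τ)) σ

lemma pb_append (b : Bool) : ∀ (σ : List Bool) (A B : Set V) (g : List Bool → Set V),
    pb A B g (σ ++ [b]) = (if b then (pb A B g σ).2 else (pb A B g σ).1, g σ)
  | [], A, B, g => by simp [pb]
  | c :: σ, A, B, g => by
    simp only [List.cons_append, pb]
    rw [pb_append b σ]

lemma QQ.model {k : ℕ} : ∀ {D A B : Set V}, QQ G k D A B → 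
    ∃ g : List Bool → Set V, (∀ σ, σ.length < k → Cn G (g σ) ∧ g σ ⊆ D) ∧
      (∀ σ τ, σ.length < k → τ.length < k → σ ≠ τ → Disjoint (g σ) (g τ)) ∧
      (∀ σ, σ.length < k → Ad G (g σ) (pb A B g σ).1 ∧ Ad G (g σ) (pb A B g σ).2) := by
  induction k with
  | zero => intro D A B _; exact ⟨fun _ => ∅, by simp, by simp, by simp⟩
  | succ k ih =>
    rintro D A B ⟨D1, C, D2, s1, s2, s3, d1, d2, d3, c, a, a', q1, q2⟩
    obtain ⟨g1, p2, p3, p4⟩ := ih q1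
    obtain ⟨g2, r2, r3, r4⟩ := ih q2
    refine ⟨fun l => match l with
      | [] => C
      | false :: σ => g1 σ
      | true :: σ => g2 σ, ?_, ?_, ?_⟩
    · rintro (_ | ⟨_ | _, σ⟩) hσ
      · exact ⟨c, s2⟩
      · have := p2 σ (by simpa using hσ)
        exact ⟨this.1, this.2.trans s1⟩
      · have := r2 σ (by simpa using hσ)
        exact ⟨this.1, this.2.trans s3⟩
    · rintro (_ | ⟨_ | _, σ⟩) (_ | ⟨_ | _, τ⟩) hσ hτ hne <;>
        simp only [List.length_cons, Nat.add_lt_add_iff_right, ne_eq, List.cons.injEq, true_and] at hσ hτ hne ⊢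
      · exact (hne trivial).elim
      · exact (d1.mono (p2 τ hτ).2 le_rfl).symm
      · exact d3.mono le_rfl (r2 τ hτ).2
      · exact d1.mono (p2 σ hσ).2 le_rfl
      · exact p3 σ τ hσ hτ hne
      · exact d2.mono (p2 σ hσ).2 (r2 τ hτ).2
      · exact (d3.mono le_rfl (r2 σ hσ).2).symm
      · exact (d2.mono (p2 τ hτ).2 (r2 σ hσ).2).symm
      · exact r3 σ τ hσ hτ hne
    · rintro (_ | ⟨_ | _, σ⟩) hσ
      · exact ⟨a.symm, a'.symm⟩
      · exact p4 σ (by simpa using hσ)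
      · exact r4 σ (by simpa using hσ)

lemma QQ.qminor {k : ℕ} {D A B : Set V} (h : QQ G k D A B) (hA : Cn G A) (hB : Cn G B)
    (hAB : Ad G A B) (dAB : Disjoint A B) (dAD : Disjoint A D) (dBD : Disjoint B D) :
    IsMinor (Qgraph k) G := by
  obtain ⟨g, p2, p3, p4⟩ := h.model
  let f : QVert k → Set V := fun w => match w with
    | Sum.inl false => A
    | Sum.inl true => B
    | Sum.inr l => g l.1.reverse
  have hf : ∀ w, Cn G (f w) := by
    rintro ((_ | _) | ⟨l, hl⟩)
    · exact hA
    · exact hB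
    · exact (p2 _ (by simpa using hl)).1
  have hs : ∀ l : {l : List Bool // l.length < k}, g l.1.reverse ⊆ D :=
    fun l => (p2 _ (by simpa using l.2)).2
  have hq : ∀ σ : List Bool, σ.length ≤ k → f (qbase k σ).1 = (pb A B g σ.reverse).1 ∧
      f (qbase k σ).2 = (pb A B g σ.reverse).2 := by
    intro σ
    induction σ with
    | nil => intro _; exact ⟨rfl, rfl⟩
    | cons b σ ih =>
      intro hσ
      have hσ' : σ.length < k := by simpa using hσ
      obtain ⟨i1, i2⟩ := ih hσ'.le
      rw [List.reverse_cons, pb_append]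
      simp only [qbase, hσ', dif_pos]
      refine ⟨?_, rfl⟩
      cases b
      · simpa using i1
      · simpa using i2
  refine ⟨f, fun w => (hf w).nonempty, hf, ?_, ?_⟩
  · rintro ((_ | _) | l) ((_ | _) | m) hne
    · exact (hne rfl).elim
    · exact dAB
    · exact dAD.mono le_rfl (hs m)
    · exact dAB.symm
    · exact (hne rfl).elim
    · exact dBD.mono le_rfl (hs m)
    · exact (dAD.mono le_rfl (hs l)).symm
    · exact (dBD.mono le_rfl (hs l)).symm
    · refine p3 _ _ (by simpa using l.2) (by simpa using m.2) fun h => hne ?_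
      have h2 : l = m := Subtype.ext (List.reverse_injective h)
      rw [h2]
  · intro w1 w2 hadj
    refine ad_of_fromEdgeSet (f := f) ?_ hadj
    rintro e (he | ⟨σ, hσ, rfl | rfl⟩)
    · exact ⟨_, _, he, hAB⟩
    · exact ⟨_, _, rfl, by rw [(hq σ hσ.le).1]; exact (p4 σ.reverse (by simpa using hσ)).1⟩
    · exact ⟨_, _, rfl, by rw [(hq σ hσ.le).2]; exact (p4 σ.reverse (by simpa using hσ)).2⟩


def TC (G : SimpleGraph V) (B : Set V) : Prop := Cn G B ∧ ∀ v, Cn G (B \ {v})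

def Pr (G : SimpleGraph V) (i : ℕ) (B : Set V) (a b : V) : Prop :=
  ∃ A T R, A ⊆ B ∧ T ⊆ B ∧ Disjoint A T ∧ Cn G A ∧ a ∈ A ∧ b ∈ R ∧ LTr G (nb G A) i T R

def Qr (G : SimpleGraph V) (j : ℕ) (B : Set V) (a b : V) : Prop :=
  ∃ A C D, A ⊆ B ∧ C ⊆ B ∧ D ⊆ B ∧ Disjoint A C ∧ Disjoint A D ∧ Disjoint C D ∧ Cn G A ∧ Cn G C ∧
    a ∈ A ∧ b ∈ C ∧ QW G j D A C

lemma nb_mono {A B : Set V} (h : A ⊆ B) : nb G A ⊆ nb G B := by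
  rintro v ⟨u, hu, e⟩
  exact ⟨u, h hu, e⟩

lemma TC.base {B : Set V} {a b : V} (h : TC G B) (ha : a ∈ B) (hb : b ∈ B) (hab : a ≠ b) :
    ∃ x ∈ B \ {a}, G.Adj a x := by
  obtain ⟨x, y, hx, hy, e, _, h2⟩ := (h.1.con ha hb).exit (R := {a}) rfl (by simpa using hab.symm)
  rw [Set.mem_singleton_iff] at hx
  subst hx
  exact ⟨y, ⟨h2, hy⟩, e⟩

lemma Pr.zero {B : Set V} {a b : V} (h : TC G B) (ha : a ∈ B) (hb : b ∈ B) (hab : a ≠ b) :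
    Pr G 0 B a b := by
  obtain ⟨x, hx, e⟩ := h.base ha hb hab
  refine ⟨{a}, B \ {a}, B \ {a}, by simpa using ha, Set.diff_subset, Set.disjoint_sdiff_right,
    cn_singleton a, rfl, ⟨hb, hab.symm⟩, rfl, h.2 a, x, hx, a, rfl, e⟩

lemma Qr.zero {B : Set V} {a b : V} (h : TC G B) (ha : a ∈ B) (hb : b ∈ B) (hab : a ≠ b) :
    Qr G 0 B a b := by
  obtain ⟨x, hx, e⟩ := h.base ha hb hab
  exact ⟨{a}, B \ {a}, ∅, by simpa using ha, Set.diff_subset, Set.empty_subset _,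
    Set.disjoint_sdiff_right, Set.disjoint_empty _, Set.disjoint_empty _,
    cn_singleton a, h.2 a, rfl, ⟨hb, hab.symm⟩, Or.inl ⟨a, rfl, x, hx, e⟩⟩

def Par (G : SimpleGraph V) (D B1 B2 : Set V) (a b : V) : Prop :=
  ∃ A C, A ⊆ D ∧ C ⊆ D ∧ Disjoint A C ∧ Cn G A ∧ Cn G C ∧ a ∈ A ∧ b ∈ C ∧
    (∃ x ∈ B1, ∃ y ∈ B1, x ≠ y ∧ Ad G A {x} ∧ Ad G C {y}) ∧
    (∃ x ∈ B2, ∃ y ∈ B2, x ≠ y ∧ Ad G A {x} ∧ Ad G C {y})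

def Ser (G : SimpleGraph V) (D B1 B2 : Set V) (a b : V) : Prop :=
  ∃ A C E, A ⊆ D ∧ C ⊆ D ∧ E ⊆ D ∧ Disjoint A C ∧ Disjoint A E ∧ Disjoint C E ∧
    Cn G A ∧ Cn G C ∧ Cn G E ∧ a ∈ A ∧ b ∈ E ∧ (Ad G A C ∨ Ad G C E) ∧
    (∃ x ∈ B1, ∃ y ∈ B1, x ≠ y ∧ Ad G A {x} ∧ Ad G C {y}) ∧
    (∃ x ∈ B2, ∃ y ∈ B2, x ≠ y ∧ Ad G C {x} ∧ Ad G E {y})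

lemma Ad.sing {A S : Set V} {x : V} (h : Ad G A {x}) (hx : x ∈ S) : Ad G A S :=
  h.mono le_rfl (by simpa using hx)

lemma Qr.lift {j : ℕ} {B B1 D A C : Set V} {a b x y : V} (hQ : Qr G j B1 x y) (hB1 : B1 ⊆ B) (hD : D ⊆ B)
    (hd : Disjoint D B1) (hA : A ⊆ D) (hC : C ⊆ D) (dAC : Disjoint A C) (cA : Cn G A) (cC : Cn G C)
    (ha : a ∈ A) (hb : b ∈ C) (h1 : Ad G A {x}) (h2 : Ad G C {y}) : Qr G j B a b := by
  obtain ⟨A', C', D', s1, s2, s3, d1, d2, d3, c1, c2, hx, hy, q⟩ := hQ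
  refine ⟨A ∪ A', C ∪ C', D', ?_, ?_, ?_, ?_, ?_, ?_, cA.union_ad c1 (h1.sing hx),
    cC.union_ad c2 (h2.sing hy), Or.inl ha, Or.inl hb,
    q.mono le_rfl Set.subset_union_right Set.subset_union_right⟩
  all_goals
    clear q c1 c2 h1 h2 cA cC
    simp only [Set.disjoint_left, Set.subset_def, Set.mem_union] at *
    grind

lemma Par.comb {i j : ℕ} {B B1 B2 D : Set V} {a b : V} (h : Par G D B1 B2 a b) (hB1 : B1 ⊆ B)
    (hB2 : B2 ⊆ B) (hD : D ⊆ B) (d1 : Disjoint D B1) (d2 : Disjoint D B2) (d12 : Disjoint B1 B2)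
    (ih1 : ∀ x ∈ B1, ∀ y ∈ B1, x ≠ y → Pr G i B1 x y ∨ Qr G j B1 x y)
    (ih2 : ∀ x ∈ B2, ∀ y ∈ B2, x ≠ y → Pr G i B2 x y ∨ Qr G j B2 x y) :
    Pr G (i + 1) B a b ∨ Qr G j B a b := by
  obtain ⟨A, C, hA, hC, dAC, cA, cC, ha, hb, ⟨x, hx, y, hy, hxy, e1, e2⟩, ⟨z, hz, w, hw, hzw, e3, e4⟩⟩ := h
  rcases ih1 x hx y hy hxy with p1 | q1
  swap
  · exact Or.inr (q1.lift hB1 hD d1 hA hC dAC cA cC ha hb e1 e2)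
  rcases ih2 z hz w hw hzw with p2 | q2
  swap
  · exact Or.inr (q2.lift hB2 hD d2 hA hC dAC cA cC ha hb e3 e4)
  left
  obtain ⟨A1, T1, R1, s1, s2, s3, s4, s5, s6, s7⟩ := p1
  obtain ⟨A2, T2, R2, t1, t2, t3, t4, t5, t6, t7⟩ := p2
  refine ⟨A ∪ A1 ∪ A2, C ∪ T1 ∪ T2, C, ?_, ?_, ?_,
    (cA.union_ad s4 (e1.sing s5)).union_ad t4 ((e3.sing t5).mono Set.subset_union_left le_rfl),
    Or.inl (Or.inl ha), hb, cC, T1, R1, T2, R2, s7.mono ?_, t7.mono ?_, rfl, ?_, ?_, ?_,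
    e2.sing s6, e4.sing t6⟩
  any_goals
    clear s7 t7 ih1 ih2 e1 e2 e3 e4 s4 t4 cA cC
    simp only [Set.disjoint_left, Set.subset_def, Set.mem_union] at *
    grind
  · exact Set.inter_subset_left.trans (nb_mono (fun v hv => Or.inl (Or.inr hv)))
  · exact Set.inter_subset_left.trans (nb_mono (fun v hv => Or.inr hv))

lemma Ser.comb {i j : ℕ} {B B1 B2 D : Set V} {a b : V} (h : Ser G D B1 B2 a b) (hB1 : B1 ⊆ B)
    (hB2 : B2 ⊆ B) (hD : D ⊆ B) (d1 : Disjoint D B1) (d2 : Disjoint D B2) (d12 : Disjoint B1 B2)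
    (c1 : Cn G B1) (c2 : Cn G B2)
    (ih1 : ∀ x ∈ B1, ∀ y ∈ B1, x ≠ y → Pr G i B1 x y ∨ Qr G j B1 x y)
    (ih2 : ∀ x ∈ B2, ∀ y ∈ B2, x ≠ y → Pr G i B2 x y ∨ Qr G j B2 x y) :
    Pr G i B a b ∨ Qr G (j + 1) B a b := by
  obtain ⟨A, C, E, hA, hC, hE, dAC, dAE, dCE, cA, cC, cE, ha, hb, hor,
    ⟨x, hx, y, hy, hxy, e1, e2⟩, ⟨z, hz, w, hw, hzw, e3, e4⟩⟩ := h
  rcases ih1 x hx y hy hxy with p1 | q1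
  · left
    obtain ⟨A1, T1, R1, s1, s2, s3, s4, s5, s6, s7⟩ := p1
    have hR := s7.sub
    have cc : Cn G (R1 ∪ C ∪ B2 ∪ E) := by
      refine ((s7.cnR.union_ad cC (e2.sing s6).symm).union_ad c2 ?_).union_ad cE ?_
      · exact (e3.sing hz).mono Set.subset_union_right le_rfl
      · exact (e4.sing hw).symm.mono Set.subset_union_right le_rfl
    have := (s7.mono (L' := nb G (A ∪ A1)) (Set.inter_subset_left.trans
      (nb_mono Set.subset_union_right))).rootext cc (fun v hv => Or.inl (Or.inl (Or.inl hv))) (by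
        clear s7 ih1 ih2 e1 e2 e3 e4 s4 cA cC cE cc hor c1 c2
        simp only [Set.disjoint_left, Set.subset_def, Set.mem_union, Set.mem_inter_iff] at *
        grind)
    refine ⟨A ∪ A1, _, _, ?_, ?_, ?_, cA.union_ad s4 (e1.sing s5), Or.inl ha, Or.inr hb, this⟩
    all_goals
      clear this s7 ih1 ih2 e1 e2 e3 e4 s4 cA cC cE cc hor c1 c2
      simp only [Set.disjoint_left, Set.subset_def, Set.mem_union, Set.mem_inter_iff] at *
      grind
  rcases ih2 z hz w hw hzw with p2 | q2
  · left
    obtain ⟨A1, T1, R1, s1, s2, s3, s4, s5, s6, s7⟩ := p2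
    have hR := s7.sub
    have cc : Cn G (R1 ∪ E) := s7.cnR.union_ad cE (e4.sing s6).symm
    have := (s7.mono (L' := nb G (A ∪ B1 ∪ C ∪ A1)) (Set.inter_subset_left.trans
      (nb_mono Set.subset_union_right))).rootext cc (fun v hv => (Or.inl hv)) (by
        clear s7 ih1 ih2 e1 e2 e3 e4 s4 cA cC cE cc hor c1 c2 q1
        simp only [Set.disjoint_left, Set.subset_def, Set.mem_union, Set.mem_inter_iff] at *
        grind)
    refine ⟨A ∪ B1 ∪ C ∪ A1, _, _, ?_, ?_, ?_, ?_, Or.inl (Or.inl (Or.inl ha)), Or.inr hb, this⟩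
    rotate_right
    · refine ((cA.union_ad c1 (e1.sing hx)).union_ad cC ?_).union_ad s4 ?_
      · exact (e2.sing hy).symm.mono Set.subset_union_right le_rfl
      · exact (e3.sing s5).mono Set.subset_union_right le_rfl
    all_goals
      clear this s7 ih1 ih2 e1 e2 e3 e4 s4 cA cC cE cc hor c1 c2 q1
      simp only [Set.disjoint_left, Set.subset_def, Set.mem_union, Set.mem_inter_iff] at *
      grind
  right
  obtain ⟨A1, C1, D1, s1, s2, s3, s4, s5, s6, s7, s8, s9, s10, s11⟩ := q1
  obtain ⟨A2, C2, D2, t1, t2, t3, t4, t5, t6, t7, t8, t9, t10, t11⟩ := q2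
  have k2 : C1 ⊆ C ∪ C1 ∪ A2 := fun v hv => Or.inl (Or.inr hv)
  refine ⟨A ∪ A1, E ∪ C2, D1 ∪ (C ∪ C1 ∪ A2) ∪ D2, ?_, ?_, ?_, ?_, ?_, ?_, cA.union_ad s7 (e1.sing s9),
    cE.union_ad t8 (e4.sing t10), Or.inl ha, Or.inl hb, D1, C ∪ C1 ∪ A2, D2,
    fun v hv => Or.inl (Or.inl hv), fun v hv => Or.inl (Or.inr hv), fun v hv => Or.inr hv,
    ?_, ?_, ?_, (cC.union_ad s8 (e2.sing s10)).union_ad t7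
      ((e3.sing t9).mono Set.subset_union_left le_rfl), ?_,
    s11.mono le_rfl Set.subset_union_right k2, t11.mono le_rfl Set.subset_union_right Set.subset_union_right⟩
  rotate_right
  · rcases hor with h | h
    · exact Or.inl (h.mono Set.subset_union_left fun v hv => Or.inl (Or.inl hv))
    · exact Or.inr (h.mono (fun v hv => Or.inl (Or.inl hv)) Set.subset_union_left)
  all_goals
    clear s11 t11 ih1 ih2 e1 e2 e3 e4 cA cC cE hor c1 c2 s7 s8 t7 t8 k2
    simp only [Set.disjoint_left, Set.subset_def, Set.mem_union, Set.mem_inter_iff] at *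
    grind


lemma split_aux {L : Set V} {u e q q' : V} (hL : Cn G L) (hu : u ∈ L) (he : e ∈ L)
    (hmin : ∀ S ⊆ L, Cn G S → u ∈ S → e ∈ S → L ⊆ S) (hq' : q' ∈ L)
    (h : Cw G (L \ {q'}) u q) :
    ∃ X Y, X ∪ Y = L ∧ Disjoint X Y ∧ Cn G X ∧ Cn G Y ∧ Ad G X Y ∧ u ∈ X ∧ e ∈ Y ∧ q ∈ X ∧ q' ∈ Y := by
  set X : Set V := {x | Cw G (L \ {q'}) u x} with hX
  have cX : Cn G X := cn_reach h.left
  have hXL : X ⊆ L := fun x hx => (Cw.right hx).1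
  have hqX : q' ∉ X := fun hx => (Cw.right hx).2 rfl
  have huX : u ∈ X := Cw.refl h.left
  have heX : e ∉ X := fun hx => hqX (hmin X hXL cX huX hx hq')
  have hnb : ∀ x ∈ X, ∀ y ∈ L, y ∉ X → G.Adj x y → y = q' := by
    intro x hx y hy hyX e
    by_contra hne
    exact hyX (Cw.step hx e ⟨hy, hne⟩)
  set Z : Set V := {x | Cw G (L \ X) e x} with hZ
  have cZ : Cn G Z := cn_reach ⟨he, heX⟩
  have heZ : e ∈ Z := Cw.refl ⟨he, heX⟩
  have hZL : Z ⊆ L \ X := fun x hx => Cw.right hx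
  obtain ⟨x, y, hx, hy, hxy, hxL, hyL⟩ := (hL.con he hu).exit (R := Z) heZ (fun h => (hZL h).2 huX)
  have hyX : y ∈ X := by
    by_contra hyX
    exact hy (Cw.step hx hxy ⟨hyL, hyX⟩)
  have had : Ad G X Z := ⟨y, hyX, x, hx, hxy.symm⟩
  have hxq : x = q' := hnb y hyX x hxL (hZL hx).2 hxy.symm
  have hun : L ⊆ X ∪ Z := hmin _ (Set.union_subset hXL (fun v hv => (hZL hv).1))
    (cX.union_ad cZ had) (Or.inl huX) (Or.inr heZ)
  refine ⟨X, Z, ?_, Set.disjoint_left.2 fun v hv hz => (hZL hz).2 hv, cX, cZ, had, huX, heZ, h, hxq ▸ hx⟩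
  exact (Set.union_subset hXL (fun v hv => (hZL hv).1)).antisymm hun

lemma split {L : Set V} {u e q q' : V} (hL : Cn G L) (hu : u ∈ L) (he : e ∈ L)
    (hmin : ∀ S ⊆ L, Cn G S → u ∈ S → e ∈ S → L ⊆ S) (hq : q ∈ L) (hq' : q' ∈ L) (hne : q ≠ q') :
    ∃ X Y, X ∪ Y = L ∧ Disjoint X Y ∧ Cn G X ∧ Cn G Y ∧ Ad G X Y ∧ u ∈ X ∧ e ∈ Y ∧
      ((q ∈ X ∧ q' ∈ Y) ∨ (q' ∈ X ∧ q ∈ Y)) := by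
  have key : Cw G (L \ {q'}) u q ∨ Cw G (L \ {q}) u q' := by
    by_cases hu' : u = q'
    · subst hu'
      exact Or.inr (Cw.refl ⟨hu, hne.symm⟩)
    by_contra hcon
    push Not at hcon
    obtain ⟨h1, h2⟩ := hcon
    obtain ⟨x, y, hx, hy, hxy, hxL, hyL⟩ := (hL.con hu hq).exit (R := {x | Cw G (L \ {q'}) u x})
      (Cw.refl ⟨hu, hu'⟩) h1
    have hyq : y = q' := by
      by_contra hne'
      exact hy (Cw.step hx hxy ⟨hyL, hne'⟩)
    subst hyq
    apply h2
    have hx' : Cw G {x | Cw G (L \ {y}) u x} u x := Cw.inReach hx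
    have hsub : {x | Cw G (L \ {y}) u x} ⊆ L \ {q} := by
      intro z hz
      refine ⟨(Cw.right hz).1, ?_⟩
      rintro rfl
      exact h1 hz
    exact (hx'.mono hsub).step hxy ⟨hyL, hne.symm⟩
  rcases key with h | h
  · obtain ⟨X, Y, h1, h2, h3, h4, h5, h6, h7, h8, h9⟩ := split_aux hL hu he hmin hq' h
    exact ⟨X, Y, h1, h2, h3, h4, h5, h6, h7, Or.inl ⟨h8, h9⟩⟩
  · obtain ⟨X, Y, h1, h2, h3, h4, h5, h6, h7, h8, h9⟩ := split_aux hL hu he hmin hq h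
    exact ⟨X, Y, h1, h2, h3, h4, h5, h6, h7, Or.inr ⟨h8, h9⟩⟩

lemma exmin [Finite V] {L : Set V} {u e : V} (hL : Cn G L) (hu : u ∈ L) (he : e ∈ L) :
    ∃ L' ⊆ L, Cn G L' ∧ u ∈ L' ∧ e ∈ L' ∧ ∀ S ⊆ L', Cn G S → u ∈ S → e ∈ S → L' ⊆ S := by
  obtain ⟨D, hD, hm⟩ := Finite.exists_le_minimal
    (p := fun D : Set V => Cn G D ∧ u ∈ D ∧ e ∈ D) (a := L) ⟨hL, hu, he⟩
  exact ⟨D, hD, hm.prop.1, hm.prop.2.1, hm.prop.2.2, fun S hS c1 c2 c3 => hm.2 ⟨c1, c2, c3⟩ hS⟩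

lemma cut {P B1 : Set V} {a : V} (hP : Cn G P) (ha : a ∈ P) (haB : a ∉ B1) (hm : (P ∩ B1).Nonempty) :
    ∃ L ⊆ P \ B1, Cn G L ∧ a ∈ L ∧ ∃ l ∈ B1, l ∈ P ∧ ∃ e ∈ L, G.Adj e l := by
  obtain ⟨z, hz, hzB⟩ := hm
  have hr : a ∈ P \ B1 := ⟨ha, haB⟩
  obtain ⟨x, y, hx, hy, hxy, hxL, hyL⟩ := (hP.con ha hz).exit (R := {x | Cw G (P \ B1) a x})
    (Cw.refl hr) (fun h => (Cw.right h).2 hzB)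
  refine ⟨_, fun v hv => Cw.right hv, cn_reach hr, Cw.refl hr, y, ?_, hyL, x, hx, hxy⟩
  by_contra hyB
  exact hy (Cw.step hx hxy ⟨hyL, hyB⟩)

lemma link [Finite V] {D B1 : Set V} {a b : V} (hab : a ≠ b) (haB : a ∉ B1) (hbB : b ∉ B1)
    (h : ∀ v, ∃ x ∈ B1, ∃ y, (y = a ∨ y = b) ∧ Cw G (D \ {v}) x y) :
    ∃ L1 L2, L1 ⊆ D \ B1 ∧ L2 ⊆ D \ B1 ∧ Disjoint L1 L2 ∧ Cn G L1 ∧ Cn G L2 ∧ a ∈ L1 ∧ b ∈ L2 ∧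
      ∃ l1 ∈ B1, ∃ l2 ∈ B1, l1 ≠ l2 ∧ ∃ e1 ∈ L1, ∃ e2 ∈ L2, G.Adj e1 l1 ∧ G.Adj e2 l2 := by
  classical
  have hne : Nonempty V := ⟨a⟩
  have hm := menger D 2 G B1 (({a, b} : Finset V) : Set V) (by
    intro T hT
    have : ∃ v, (T : Set V) ⊆ {v} := by
      have : T.card ≤ 1 := by omega
      rcases Finset.card_le_one_iff_subset_singleton.1 this with ⟨v, hv⟩
      exact ⟨v, by simpa [← Finset.coe_subset] using hv⟩
    obtain ⟨v, hv⟩ := this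
    obtain ⟨x, hx, y, hy, hc⟩ := h v
    refine ⟨x, hx, y, by simpa using hy, hc.mono ?_⟩
    exact fun z hz => ⟨hz.1, fun hz' => hz.2 (hv hz')⟩)
  obtain ⟨-, P, hP, hd⟩ := menger_aux2 ({a, b} : Finset V) (by rw [Finset.card_pair hab]) hm
  obtain ⟨a1, a2, a3, a4, -⟩ := hP a (by simp)
  obtain ⟨b1, b2, b3, b4, -⟩ := hP b (by simp)
  have hd := hd a (by simp) b (by simp) hab
  obtain ⟨L1, s1, c1, h1, l1, hl1, hl1', e1, he1, k1⟩ := cut a2 a4 haB a3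
  obtain ⟨L2, s2, c2, h2, l2, hl2, hl2', e2, he2, k2⟩ := cut b2 b4 hbB b3
  refine ⟨L1, L2, s1.trans (Set.sdiff_subset_sdiff_left a1), s2.trans (Set.sdiff_subset_sdiff_left b1),
    hd.mono (s1.trans Set.sdiff_subset) (s2.trans Set.sdiff_subset), c1, c2, h1, h2, l1, hl1, l2, hl2,
    ?_, e1, he1, e2, he2, k1, k2⟩
  rintro rfl
  exact dj hd _ hl1' hl2'

lemma route [Finite V] {D B1 B2 L1 L2 R1 R2 : Set V} {a b l1 l2 e1 e2 r1 r2 f1 f2 : V}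
    (sL1 : L1 ⊆ D) (sL2 : L2 ⊆ D) (dL : Disjoint L1 L2) (cL1 : Cn G L1) (cL2 : Cn G L2)
    (aL : a ∈ L1) (bL : b ∈ L2) (hl1 : l1 ∈ B1) (hl2 : l2 ∈ B1) (hl : l1 ≠ l2)
    (he1 : e1 ∈ L1) (he2 : e2 ∈ L2) (ad1 : G.Adj e1 l1) (ad2 : G.Adj e2 l2)
    (sR1 : R1 ⊆ D) (sR2 : R2 ⊆ D) (dR : Disjoint R1 R2) (cR1 : Cn G R1) (cR2 : Cn G R2)
    (aR : a ∈ R1) (bR : b ∈ R2) (hr1 : r1 ∈ B2) (hr2 : r2 ∈ B2) (hr : r1 ≠ r2)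
    (hf1 : f1 ∈ R1) (hf2 : f2 ∈ R2) (ad3 : G.Adj f1 r1) (ad4 : G.Adj f2 r2) :
    Par G D B1 B2 a b ∨ Ser G D B1 B2 a b ∨ Ser G D B2 B1 a b := by
  obtain ⟨M1, t1, cM1, aM, eM1, min1⟩ := exmin cL1 aL he1
  obtain ⟨M2, t2, cM2, bM, eM2, min2⟩ := exmin cL2 bL he2
  have dM : Disjoint M1 M2 := dL.mono t1 t2
  replace sL1 := t1.trans sL1
  replace sL2 := t2.trans sL2
  clear t1 t2 dL cL1 cL2 aL bL he1 he2
  obtain ⟨q1, hq1, hq1R, W1, sW1, cW1, fW1, qW1, hW1⟩ :=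
    (cR1.con hf1 aR).firstHit (T := M1 ∪ M2) (Or.inl aM)
  obtain ⟨q2, hq2, hq2R, W2, sW2, cW2, fW2, qW2, hW2⟩ :=
    (cR2.con hf2 bR).firstHit (T := M1 ∪ M2) (Or.inr bM)
  have dW : Disjoint W1 W2 := dR.mono sW1 sW2
  replace sW1 := sW1.trans sR1
  replace sW2 := sW2.trans sR2
  replace hW1 : ∀ x ∈ W1, x ∈ M1 ∪ M2 → x = q1 := fun x hx hxM => by
    by_contra hne
    exact (Cw.right (hW1 x hx hne)).2 hxM
  replace hW2 : ∀ x ∈ W2, x ∈ M1 ∪ M2 → x = q2 := fun x hx hxM => by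
    by_contra hne
    exact (Cw.right (hW2 x hx hne)).2 hxM
  clear sR1 sR2 dR cR1 cR2 aR bR hf1 hf2 hq1R hq2R
  -- the symmetric statement in the two tails
  have key : ∀ (W W' : Set V) (q q' f f' r r' : V), q ∈ M1 ∪ M2 → q' ∈ M1 ∪ M2 →
      Disjoint W W' → W ⊆ D → W' ⊆ D → Cn G W → Cn G W' → f ∈ W → f' ∈ W' → q ∈ W → q' ∈ W' →
      G.Adj f r → G.Adj f' r' → r ∈ B2 → r' ∈ B2 → r ≠ r' →
      (∀ x ∈ W, x ∈ M1 ∪ M2 → x = q) → (∀ x ∈ W', x ∈ M1 ∪ M2 → x = q') →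
      (q ∈ M1 → q' ∈ M2 → Par G D B1 B2 a b) ∧
      (∀ X Y, X ∪ Y = M1 → Disjoint X Y → Cn G X → Cn G Y → Ad G X Y → a ∈ X → e1 ∈ Y → q ∈ X → q' ∈ Y →
        Ser G D B2 B1 a b) ∧
      (∀ X Y, X ∪ Y = M2 → Disjoint X Y → Cn G X → Cn G Y → Ad G X Y → b ∈ X → e2 ∈ Y → q ∈ X → q' ∈ Y →
        Ser G D B1 B2 a b) := by
    clear hq1 hq2 qW1 qW2 hW1 hW2 cW1 cW2 fW1 fW2 dW sW1 sW2 ad3 ad4 hr hr1 hr2 min1 min2 W1 W2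
    intro W W' q q' f f' r r' hq hq' dW sW sW' cW cW' fW fW' qW qW' ad3 ad4 hr hr' hne hW hW'
    refine ⟨?_, ?_, ?_⟩
    · intro h1 h2
      refine ⟨M1 ∪ W, M2 ∪ W', Set.union_subset sL1 sW, Set.union_subset sL2 sW', ?_,
        cM1.union_inter cW ⟨q, h1, qW⟩, cM2.union_inter cW' ⟨q', h2, qW'⟩, Or.inl aM, Or.inl bM,
        ⟨l1, hl1, l2, hl2, hl, ⟨e1, Or.inl eM1, l1, rfl, ad1⟩, ⟨e2, Or.inl eM2, l2, rfl, ad2⟩⟩,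
        ⟨r, hr, r', hr', hne, ⟨f, Or.inr fW, r, rfl, ad3⟩, ⟨f', Or.inr fW', r', rfl, ad4⟩⟩⟩
      clear cW cW' cM1 cM2 ad1 ad2 ad3 ad4
      simp only [Set.disjoint_left, Set.subset_def, Set.mem_union] at *
      grind
    · intro X Y hXY dXY cX cY aXY aX eY qX qY
      refine ⟨X ∪ W, Y ∪ W', M2, ?_, ?_, sL2, ?_, ?_, ?_, cX.union_inter cW ⟨q, qX, qW⟩,
        cY.union_inter cW' ⟨q', qY, qW'⟩, cM2, Or.inl aX, bM,
        Or.inl (aXY.mono Set.subset_union_left Set.subset_union_left),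
        ⟨r, hr, r', hr', hne, ⟨f, Or.inr fW, r, rfl, ad3⟩, ⟨f', Or.inr fW', r', rfl, ad4⟩⟩,
        ⟨l1, hl1, l2, hl2, hl, ⟨e1, Or.inl eY, l1, rfl, ad1⟩, ⟨e2, eM2, l2, rfl, ad2⟩⟩⟩
      all_goals
        clear cW cW' cM1 cM2 ad1 ad2 ad3 ad4 cX cY aXY
        subst hXY
        simp only [Set.disjoint_left, Set.subset_def, Set.mem_union] at *
        grind
    · intro X Y hXY dXY cX cY aXY aX eY qX qY
      refine ⟨M1, Y ∪ W', X ∪ W, sL1, ?_, ?_, ?_, ?_, ?_, cM1, 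
        cY.union_inter cW' ⟨q', qY, qW'⟩, cX.union_inter cW ⟨q, qX, qW⟩, aM, Or.inl aX,
        Or.inr (aXY.symm.mono Set.subset_union_left Set.subset_union_left),
        ⟨l1, hl1, l2, hl2, hl, ⟨e1, eM1, l1, rfl, ad1⟩, ⟨e2, Or.inl eY, l2, rfl, ad2⟩⟩,
        ⟨r', hr', r, hr, hne.symm, ⟨f', Or.inr fW', r', rfl, ad4⟩, ⟨f, Or.inr fW, r, rfl, ad3⟩⟩⟩
      all_goals
        clear cW cW' cM1 cM2 ad1 ad2 ad3 ad4 cX cY aXY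
        subst hXY
        simp only [Set.disjoint_left, Set.subset_def, Set.mem_union] at *
        grind
  have hq12 : q1 ≠ q2 := by
    rintro rfl
    exact dj dW _ qW1 qW2
  obtain ⟨k1, k2, k3⟩ := key W1 W2 q1 q2 f1 f2 r1 r2 hq1 hq2 dW sW1 sW2 cW1 cW2 fW1 fW2 qW1 qW2 ad3 ad4
    hr1 hr2 hr hW1 hW2
  obtain ⟨m1, m2, m3⟩ := key W2 W1 q2 q1 f2 f1 r2 r1 hq2 hq1 dW.symm sW2 sW1 cW2 cW1 fW2 fW1 qW2 qW1 ad4 ad3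
    hr2 hr1 hr.symm hW2 hW1
  clear key
  rcases hq1 with hq1 | hq1 <;> rcases hq2 with hq2 | hq2
  · obtain ⟨X, Y, h1, h2, h3, h4, h5, h6, h7, h8 | h8⟩ := split cM1 aM eM1 min1 hq1 hq2 hq12
    · exact Or.inr (Or.inr (k2 X Y h1 h2 h3 h4 h5 h6 h7 h8.1 h8.2))
    · exact Or.inr (Or.inr (m2 X Y h1 h2 h3 h4 h5 h6 h7 h8.1 h8.2))
  · exact Or.inl (k1 hq1 hq2)
  · exact Or.inl (m1 hq2 hq1)
  · obtain ⟨X, Y, h1, h2, h3, h4, h5, h6, h7, h8 | h8⟩ := split cM2 bM eM2 min2 hq1 hq2 hq12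
    · exact Or.inr (Or.inl (k3 X Y h1 h2 h3 h4 h5 h6 h7 h8.1 h8.2))
    · exact Or.inr (Or.inl (m3 X Y h1 h2 h3 h4 h5 h6 h7 h8.1 h8.2))


lemma co_step {B X0 R0 X R : Set V} (c : Cn G (B \ X0)) (ad : Ad G (B \ X0) R0) (hX : X ⊆ X0)
    (hX0 : X0 ⊆ B) (h : coC G X0 R0 X R) : Cn G (B \ X) ∧ Ad G (B \ X) R := by
  rcases h with ⟨rfl, rfl⟩ | ⟨h1, h2, h3⟩
  · exact ⟨c, ad⟩
  have he : B \ X = (B \ X0) ∪ (X0 \ X) := by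
    ext v
    simp only [Set.mem_sdiff, Set.mem_union, Set.subset_def] at *
    grind
  rw [he]
  exact ⟨c.union_ad h1 (ad.mono le_rfl h2), h3.mono Set.subset_union_right le_rfl⟩

lemma avoid_pt {n : ℕ} {X R : Set V} (a : V) (h : LTr G Set.univ (n + 1) X R) :
    ∃ Y R', Y ⊆ X ∧ LTr G Set.univ n Y R' ∧ a ∉ Y ∧ coC G X R Y R' := by
  rcases LTr.avoid (L := {a}) h with ⟨R', _, _, T1, R1, T2, R2, h1, h2, _, _, _, hd, _⟩ | h
  · obtain ⟨rfl, _, x, hx, rfl⟩ := h1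
    obtain ⟨rfl, _, y, hy, rfl⟩ := h2
    exact absurd hy (dj hd _ hx)
  · obtain ⟨Y, R', h1, h2, h3, h4⟩ := h
    exact ⟨Y, R', h1, h2, fun hY => dj h3 _ hY rfl, h4⟩

lemma avoid_nb {n k : ℕ} {B X R : Set V} (hP : ¬ IsMinor (Pgraph k) G) (hc : Cn G (B \ X))
    (h : LTr G Set.univ (n + k) X R) :
    ∃ Y R', Y ⊆ X ∧ LTr G Set.univ n Y R' ∧ Disjoint Y (nb G (B \ X)) ∧ coC G X R Y R' := by
  rcases LTr.avoid (L := nb G (B \ X)) h with ⟨R', _, h'⟩ | h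
  · exact absurd (h'.pminor hc Set.disjoint_sdiff_left) hP
  · exact h

lemma tc_child [Finite V] {B Y Z : Set V} (hB : TC G B) (hYB : Y ⊆ B) (hZY : Z ⊆ Y) (cY : Cn G Y) (cZ : Cn G Z)
    (cYZ : Cn G (Y \ Z)) (hd : Disjoint Z (nb G (B \ Y))) : ∃ S, Z ⊆ S ∧ S ⊆ Y ∧ TC G S := by
  have h1 : ∀ v ∈ Z, Cn G (Y \ {v}) := by
    intro v hv
    obtain ⟨u, hu⟩ := cYZ.nonempty
    have hsub : Y \ Z ⊆ Y \ {v} := fun x hx => ⟨hx.1, fun h => hx.2 (h ▸ hv)⟩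
    refine cn_of u (hsub hu) ?_
    intro y hy
    apply Cw.symm
    by_contra hcon
    have hK : ∀ x, Cw G (Y \ {v}) y x → x ∈ Z := by
      intro x hx
      by_contra hxZ
      exact hcon (hx.trans ((cYZ.con ⟨hx.right.1, hxZ⟩ hu).mono hsub))
    obtain ⟨p, p', hp, hp', e, hpB, hpB'⟩ := ((hB.2 v).con ⟨hYB hy.1, hy.2⟩
      ⟨hYB hu.1, (hsub hu).2⟩).exit (R := {x | Cw G (Y \ {v}) y x}) (Cw.refl hy) hcon
    by_cases hY : p' ∈ Y
    · exact hp' (Cw.step hp e ⟨hY, hpB'.2⟩)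
    · exact dj hd p (hK p hp) ⟨p', ⟨hpB'.1, hY⟩, e.symm⟩
  obtain ⟨S, hSY, hm⟩ := Finite.exists_le_minimal
    (p := fun S : Set V => Z ⊆ S ∧ Cn G S ∧ ∀ v ∈ Z, Cn G (S \ {v})) (a := Y) ⟨hZY, cY, h1⟩
  obtain ⟨hZS, cS, hS⟩ := hm.prop
  refine ⟨S, hZS, hSY, cS, fun v => ?_⟩
  by_cases hvZ : v ∈ Z
  · exact hS v hvZ
  by_cases hvS : v ∈ S
  swap
  · rwa [Set.sdiff_singleton_eq_self hvS]
  obtain ⟨z0, hz0⟩ := cZ.nonempty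
  have hZS' : Z ⊆ S \ {v} := fun x hx => ⟨hZS hx, fun h => hvZ (h ▸ hx)⟩
  set K : Set V := {x | Cw G (S \ {v}) z0 x} with hK
  have cK : Cn G K := cn_reach (hZS' hz0)
  have hKS : K ⊆ S \ {v} := fun x hx => Cw.right hx
  have hZK : Z ⊆ K := fun z hz => (cZ.con hz0 hz).mono hZS'
  have hstep : ∀ p ∈ K, ∀ p' ∈ S, G.Adj p p' → p' ∈ K ∪ {v} := by
    intro p hp p' hp' e
    by_cases h : p' = v
    · exact Or.inr h
    · exact Or.inl (Cw.step hp e ⟨hp', h⟩)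
  have had : Ad G K {v} := by
    obtain ⟨p, p', hp, hp', e, _, h2⟩ := (cS.con (hZS hz0) hvS).exit (R := K) (hZK hz0) (fun h => (hKS h).2 rfl)
    rcases hstep p hp p' h2 e with h | h
    · exact absurd h hp'
    · exact ⟨p, hp, p', h, e⟩
  have hle : K ∪ {v} ⊆ S := Set.union_subset (fun x hx => (hKS hx).1) (by simpa using hvS)
  have hKv : S ⊆ K ∪ {v} := by
    refine hm.2 ⟨hZK.trans Set.subset_union_left, cK.union_ad (cn_singleton v) had, ?_⟩ hle
    intro z hz
    have hvz : v ≠ z := fun h => hvZ (h ▸ hz)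
    have hv' : v ∈ (K ∪ {v}) \ {z} := ⟨Or.inr rfl, hvz⟩
    refine cn_of v hv' ?_
    intro x hx
    apply Cw.symm
    by_contra hcon
    obtain ⟨p, p', hp, hp', e, _, h2⟩ := ((hS z hz).con (u := x) (v := v) ⟨hle hx.1, hx.2⟩ ⟨hvS, hvz⟩).exit
      (R := {y | Cw G ((K ∪ {v}) \ {z}) x y}) (Cw.refl hx) hcon
    have hpK : p ∈ K := by
      rcases (Cw.right hp).1 with h | h
      · exact h
      · rw [Set.mem_singleton_iff] at h
        subst h
        exact absurd hp hcon
    exact hp' (Cw.step hp e ⟨hstep p hpK p' h2.1 e, h2.2⟩)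
  have : S \ {v} = K := by
    apply Set.Subset.antisymm _ hKS
    intro x hx
    rcases hKv hx.1 with h | h
    · exact h
    · exact absurd h hx.2
  rw [this]
  exact cK

lemma child [Finite V] {n k : ℕ} {B X0 R0 : Set V} {a b : V} (hP : ¬ IsMinor (Pgraph k) G) (hB : TC G B)
    (hX0 : X0 ⊆ B) (h : LTr G Set.univ (n + k + k + 1 + 1) X0 R0) (hc : Cn G (B \ X0))
    (had : Ad G (B \ X0) R0) :
    ∃ X Y S R', S ⊆ Y ∧ Y ⊆ X ∧ X ⊆ X0 ∧ a ∉ X ∧ b ∉ X ∧ Cn G (B \ X) ∧ Cn G (X \ Y) ∧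
      Disjoint Y (nb G (B \ X)) ∧ TC G S ∧ LTr G Set.univ n S R' := by
  obtain ⟨Xa, Ra, s1, l1, na, co1⟩ := avoid_pt a h
  obtain ⟨X, R, s2, l2, nb', co2⟩ := avoid_pt b l1
  obtain ⟨c2, ad2⟩ := co_step hc had (s2.trans s1) hX0 (co1.trans co2 s1 s2)
  have hXB : X ⊆ B := (s2.trans s1).trans hX0
  obtain ⟨Y, RY, s3, l3, d3, co3⟩ := avoid_nb hP c2 l2
  obtain ⟨c3, ad3⟩ := co_step c2 ad2 s3 hXB co3
  obtain ⟨Z, RZ, s4, l4, d4, co4⟩ := avoid_nb hP c3 l3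
  obtain ⟨c4, ad4⟩ := co_step c3 ad3 s4 (s3.trans hXB) co4
  have cXY : Cn G (X \ Y) := by
    rcases co3 with ⟨rfl, rfl⟩ | h
    · obtain ⟨u, hu, v, hv, e⟩ := ad3
      exact absurd ⟨u, hu, e⟩ (dj d3 v (l3.sub hv))
    · exact h.1
  have cYZ : Cn G (Y \ Z) := by
    rcases co4 with ⟨rfl, rfl⟩ | h
    · obtain ⟨u, hu, v, hv, e⟩ := ad4
      exact absurd ⟨u, hu, e⟩ (dj d4 v (l4.sub hv))
    · exact h.1
  obtain ⟨S, hZS, hSY, tS⟩ := tc_child hB (s3.trans hXB) s4 l3.cnT l4.cnT cYZ d4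
  obtain ⟨R', _, hR'⟩ := l4.ext tS.1 hZS
  exact ⟨X, Y, S, R', hSY, s3, s2.trans s1, fun h => na (s2 h), nb', c2, cXY, d3, tS, hR'⟩

lemma sep {B B1 X2 Y2 : Set V} {a b : V} (hB : TC G B) (hB1 : B1 ⊆ B) (t1 : TC G B1)
    (hYX : Y2 ⊆ X2) (hX : X2 ⊆ B) (d : Disjoint B1 X2) (ha : a ∈ B) (hb : b ∈ B) (hab : a ≠ b)
    (haX : a ∉ X2) (hbX : b ∉ X2) (cX : Cn G (B \ X2)) (cXY : Cn G (X2 \ Y2))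
    (dn : Disjoint Y2 (nb G (B \ X2))) (v : V) :
    ∃ x ∈ B1, ∃ y, (y = a ∨ y = b) ∧ Cw G ((B \ Y2) \ {v}) x y := by
  by_cases hv : v ∈ X2
  · obtain ⟨x, hx⟩ := t1.1.nonempty
    refine ⟨x, hx, a, Or.inl rfl, (cX.con ⟨hB1 hx, dj d x hx⟩ ⟨ha, haX⟩).mono ?_⟩
    rintro z ⟨h1, h2⟩
    refine ⟨⟨h1, fun h => h2 (hYX h)⟩, ?_⟩
    rintro rfl
    exact h2 hv
  obtain ⟨x, hx, hxv⟩ := (t1.2 v).nonempty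
  obtain ⟨y, hy, hyv⟩ : ∃ y, (y = a ∨ y = b) ∧ y ≠ v := by
    by_cases h : a = v
    · exact ⟨b, Or.inr rfl, fun h' => hab (h.trans h'.symm)⟩
    · exact ⟨a, Or.inl rfl, h⟩
  have hyB : y ∈ B ∧ y ∉ X2 := by
    rcases hy with rfl | rfl
    · exact ⟨ha, haX⟩
    · exact ⟨hb, hbX⟩
  refine ⟨x, hx, y, hy, ?_⟩
  have hsub : X2 \ Y2 ⊆ (B \ Y2) \ {v} := by
    rintro z ⟨h1, h2⟩
    refine ⟨⟨hX h1, h2⟩, ?_⟩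
    rintro rfl
    exact hv h1
  have key : ∀ s t, s ∈ (B \ Y2) \ {v} → t ∈ (B \ Y2) \ {v} → ¬ Cw G ((B \ Y2) \ {v}) s t →
      ∃ p ∈ X2 \ Y2, Cw G ((B \ Y2) \ {v}) s p := by
    intro s t hs ht hcon
    obtain ⟨p, p', hp, hp', e, hpB, hpB'⟩ := ((hB.2 v).con (u := s) (v := t) ⟨hs.1.1, hs.2⟩ ⟨ht.1.1, ht.2⟩).exit
      (R := {x | Cw G ((B \ Y2) \ {v}) s x}) (Cw.refl hs) hcon
    have hpY : p' ∈ Y2 := by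
      by_contra h
      exact hp' (Cw.step hp e ⟨⟨hpB'.1, h⟩, hpB'.2⟩)
    refine ⟨p, ⟨?_, (Cw.right hp).1.2⟩, hp⟩
    by_contra hpX
    exact dj dn p' hpY ⟨p, ⟨hpB.1, hpX⟩, e⟩
  have hxs : x ∈ (B \ Y2) \ {v} := ⟨⟨hB1 hx, fun h => dj d x hx (hYX h)⟩, hxv⟩
  have hys : y ∈ (B \ Y2) \ {v} := ⟨⟨hyB.1, fun h => hyB.2 (hYX h)⟩, hyv⟩
  by_contra hcon
  obtain ⟨p, hp, h1⟩ := key x y hxs hys hcon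
  obtain ⟨q, hq, h2⟩ := key y x hys hxs (fun h => hcon h.symm)
  exact hcon (h1.trans (((cXY.con hp hq).mono hsub).trans h2.symm))

lemma step [Finite V] {n k : ℕ} {B R : Set V} {a b : V} (hP : ¬ IsMinor (Pgraph k) G) (hB : TC G B)
    (h : LTr G Set.univ (n + k + k + 1 + 1 + 1) B R) (ha : a ∈ B) (hb : b ∈ B) (hab : a ≠ b) :
    ∃ D B1 B2 R1 R2, B1 ⊆ B ∧ B2 ⊆ B ∧ D ⊆ B ∧ Disjoint D B1 ∧ Disjoint D B2 ∧ Disjoint B1 B2 ∧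
      TC G B1 ∧ TC G B2 ∧ LTr G Set.univ n B1 R1 ∧ LTr G Set.univ n B2 R2 ∧
      (Par G D B1 B2 a b ∨ Ser G D B1 B2 a b ∨ Ser G D B2 B1 a b) := by
  obtain ⟨cR, T1, Q1, T2, Q2, l1, l2, hBe, d1, d2, d12, ad1, ad2⟩ := h
  have hT1 : T1 ⊆ B := by rw [hBe]; exact fun v hv => Or.inl (Or.inr hv)
  have hT2 : T2 ⊆ B := by rw [hBe]; exact fun v hv => Or.inr hv
  have e1 : B \ T1 = R ∪ T2 := by
    ext v
    subst hBe
    clear ad1 ad2 l1 l2 cR hB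
    simp only [Set.disjoint_left, Set.mem_sdiff, Set.mem_union] at *
    grind
  have e2 : B \ T2 = R ∪ T1 := by
    ext v
    subst hBe
    clear ad1 ad2 l1 l2 cR hB
    simp only [Set.disjoint_left, Set.mem_sdiff, Set.mem_union] at *
    grind
  obtain ⟨X1, Y1, S1, R1, s1, s2, s3, s4, s5, s6, s7, s8, s9, s10⟩ := child (a := a) (b := b) hP hB hT1 l1
    (by rw [e1]; exact cR.union_ad l2.cnT (ad2.mono le_rfl l2.sub))
    (by rw [e1]; exact ad1.mono Set.subset_union_left le_rfl)
  obtain ⟨X2, Y2, S2, R2, t1, t2, t3, t4, t5, t6, t7, t8, t9, t10⟩ := child (a := a) (b := b) hP hB hT2 l2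
    (by rw [e2]; exact cR.union_ad l1.cnT (ad1.mono le_rfl l1.sub))
    (by rw [e2]; exact ad2.mono Set.subset_union_left le_rfl)
  have hS1 : S1 ⊆ X1 := s1.trans s2
  have hS2 : S2 ⊆ X2 := t1.trans t2
  have dX : Disjoint X1 X2 := d12.mono s3 t3
  have hX1 := s3.trans hT1
  have hX2 := t3.trans hT2
  obtain ⟨L1, L2, a1, a2, a3, a4, a5, a6, a7, x1, a8, x2, a9, a10, y1, a11, y2, a12, a13, a14⟩ := link hab (fun h => s4 (hS1 h))
    (fun h => s5 (hS1 h)) (sep hB (hS1.trans hX1) s9 t2 hX2 (dX.mono_left hS1) ha hb hab t4 t5 t6 t7 t8)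
  obtain ⟨M1, M2, b1, b2, b3, b4, b5, b6, b7, z1, b8, z2, b9, b10, w1, b11, w2, b12, b13, b14⟩ := link hab (fun h => t4 (hS2 h))
    (fun h => t5 (hS2 h)) (sep hB (hS2.trans hX2) t9 s2 hX1 (dX.symm.mono_left hS2) ha hb hab s4 s5 s6 s7 s8)
  have u1 : (B \ Y2) \ S1 ⊆ B \ (S1 ∪ S2) := by
    rintro v ⟨⟨h1, h2⟩, h3⟩
    exact ⟨h1, fun h => h.elim h3 fun h => h2 (t1 h)⟩
  have u2 : (B \ Y1) \ S2 ⊆ B \ (S1 ∪ S2) := by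
    rintro v ⟨⟨h1, h2⟩, h3⟩
    exact ⟨h1, fun h => h.elim (fun h => h2 (s1 h)) h3⟩
  refine ⟨B \ (S1 ∪ S2), S1, S2, R1, R2, hS1.trans hX1, hS2.trans hX2, Set.sdiff_subset,
    Set.disjoint_sdiff_left.mono_right Set.subset_union_left,
    Set.disjoint_sdiff_left.mono_right Set.subset_union_right, dX.mono hS1 hS2, s9, t9, s10, t10, ?_⟩
  exact route (a1.trans u1) (a2.trans u1) a3 a4 a5 a6 a7 a8 a9 a10 a11 a12 a13 a14
    (b1.trans u2) (b2.trans u2) b3 b4 b5 b6 b7 b8 b9 b10 b11 b12 b13 b14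

lemma main_ind [Finite V] {k : ℕ} (hP : ¬ IsMinor (Pgraph k) G) (h : ℕ) : ∀ (i j : ℕ) (B R : Set V) (a b : V),
    i + j = h → TC G B → LTr G Set.univ ((2 * k + 3) * h) B R → a ∈ B → b ∈ B → a ≠ b →
    Pr G i B a b ∨ Qr G j B a b := by
  induction h with
  | zero =>
    intro i j B R a b hij hB _ ha hb hab
    obtain rfl : i = 0 := by omega
    exact Or.inl (Pr.zero hB ha hb hab)
  | succ h ih =>
    intro i j B R a b hij hB hL ha hb hab
    cases i with
    | zero => exact Or.inl (Pr.zero hB ha hb hab)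
    | succ i =>
    cases j with
    | zero => exact Or.inr (Qr.zero hB ha hb hab)
    | succ j =>
    have he : (2 * k + 3) * (h + 1) = (2 * k + 3) * h + k + k + 1 + 1 + 1 := by ring
    rw [he] at hL
    obtain ⟨D, B1, B2, R1, R2, s1, s2, s3, d1, d2, d12, t1, t2, l1, l2, hc⟩ := step hP hB hL ha hb hab
    rcases hc with hc | hc | hc
    · exact hc.comb s1 s2 s3 d1 d2 d12
        (fun x hx y hy hxy => ih i (j + 1) B1 R1 x y (by omega) t1 l1 hx hy hxy)
        (fun x hx y hy hxy => ih i (j + 1) B2 R2 x y (by omega) t2 l2 hx hy hxy)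
    · exact hc.comb s1 s2 s3 d1 d2 d12 t1.1 t2.1
        (fun x hx y hy hxy => ih (i + 1) j B1 R1 x y (by omega) t1 l1 hx hy hxy)
        (fun x hx y hy hxy => ih (i + 1) j B2 R2 x y (by omega) t2 l2 hx hy hxy)
    · exact hc.comb s2 s1 s3 d2 d1 d12.symm t2.1 t1.1
        (fun x hx y hy hxy => ih (i + 1) j B2 R2 x y (by omega) t2 l2 hx hy hxy)
        (fun x hx y hy hxy => ih (i + 1) j B1 R1 x y (by omega) t1 l1 hx hy hxy)

theorem final_aux (k : ℕ) [Fintype V] (hG : IsKConnected 2 G)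
    (hp : 2 ^ ((2 * k + 3) * (k + (2 * k + 1)) + 1) - 1 ≤ pathwidth G) :
    IsMinor (Pgraph k) G ∨ IsMinor (Qgraph k) G := by
  classical
  by_contra hcon
  push Not at hcon
  obtain ⟨hP, hQ⟩ := hcon
  obtain ⟨hcard, hconn⟩ := hG
  obtain ⟨a, b, hab⟩ := Fintype.one_lt_card_iff.1 (show 1 < Fintype.card V by omega)
  have : Nonempty V := ⟨a⟩
  have hB : TC G Set.univ := by
    refine ⟨?_, fun v => ?_⟩
    · have := hconn ∅ (by simp)
      rwa [Finset.coe_empty, Set.compl_empty] at this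
    · have := hconn {v} (by simp)
      rwa [Finset.coe_singleton, Set.compl_eq_univ_sdiff] at this
  obtain ⟨T, R, hT⟩ := pw_LTr hp
  obtain ⟨R', _, hL⟩ := hT.ext hB.1 (Set.subset_univ _)
  rcases main_ind hP _ k (2 * k + 1) Set.univ R' a b rfl hB hL trivial trivial hab with h | h
  · obtain ⟨A, T, R, _, _, d, c, _, _, h⟩ := h
    exact hP (h.pminor c d)
  · obtain ⟨A, C, D, _, _, _, d1, d2, d3, c1, c2, _, _, q⟩ := h
    obtain ⟨A', B', D', _, _, _, _, _, d1, d2, d3, c1, c2, ad, q⟩ := q.toQQ c1 c2 d1 d2 d3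
    exact hQ (q.qminor c1 c2 ad d1 d2 d3)

end AuxProof

/-- Lemma 7.8. For all positive integers `k` and `w` there is a number
`p` such that every 2-connected graph of tree-width less than `w` and path-width at least
`p` has a `𝒫_k` or `𝒬_k` minor. -/
theorem two_connected_bounded_treewidth_large_pathwidth_has_Pk_or_Qk_minor
    (k w : ℕ) (hk : 0 < k) (hw : 0 < w) :
    ∃ p : ℕ, ∀ (V : Type) [Fintype V] (G : SimpleGraph V),
      IsKConnected 2 G → treewidth G < w → p ≤ pathwidth G →
        IsMinor (Pgraph k) G ∨ IsMinor (Qgraph k) G := by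
  refine ⟨2 ^ ((2 * k + 3) * (k + (2 * k + 1)) + 1) - 1, ?_⟩
  intro V _ G hG _ hp
  exact final_aux k hG hp
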